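/- There exists a sequence (p_k)_{k∈ℤ} with 1/(1+e) < p_k < e/(1+e) for all k, such that, letting P = ∏_{k∈ℤ} P_k be the product measure on 𝕏 = {0,1}^ℤ with P_k({1}) = p_k, the left shift T is nonsingular with respect to P, and for every real λ > 0 the number λ belongs to the ratio set R(T,P); in particular T admits no σ-finite T-invariant measure equivalent to P (T is of type III). -/

import Mathlib

open MeasureTheory Filter Topology

noncomputable section

/-- The sequence space `{0,1}^ℤ`, with `true` playing the role of `1`. -/
abbrev Xspace := ℤ → Bool

/-- The left shift `(Tw)_i = w_{i+1}`. -/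
def shiftT (w : Xspace) : Xspace := fun i => w (i + 1)

/-- The inverse of the left shift, so that `P ∘ T = Measure.map shiftInv P`. -/
def shiftInv (w : Xspace) : Xspace := fun i => w (i - 1)

/-- `coordWt p b` is `P_k({b})` when `P_k({0}) = p`. -/
def coordWt (p : ℝ) (b : Bool) : ℝ := if b then 1 - p else p

/-- The set `A_t = {∏_{u=1}^t λ_u^{x_u} : x_u ∈ ℤ, |x_u| ≤ n_u}`. -/
def Aset (lam : ℕ → ℝ) (nn : ℕ → ℕ) (t : ℕ) : Set ℝ :=
  {x | ∃ c : ℕ → ℤ, (∀ u, |c u| ≤ (nn u : ℤ)) ∧ x = ∏ u ∈ Finset.Icc 1 t, lam u ^ c u}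

/-- The data of Kosloff's inductive construction: a summable sequence `ε_t > 0`,
`M_0 = 1`, `λ_t = exp(2^{-k_t})` with `k_t = ⌊log₂(M_{t-1}/ε_t)⌋ + 1`,
`n_t` a positive integer satisfying Property *, `N_t = M_{t-1} + n_t`,
`m_t = N_t (2 + 2^{3N_t})`, `M_t = N_t + m_t`. -/
structure KosloffData where
  eps : ℕ → ℝ
  lam : ℕ → ℝ
  nn : ℕ → ℕ
  M : ℕ → ℕ
  N : ℕ → ℕ
  m : ℕ → ℕ
  eps_pos : ∀ t, 1 ≤ t → 0 < eps t
  eps_summable : Summable eps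
  M_zero : M 0 = 1
  lam_def : ∀ t, 1 ≤ t →
    lam t = Real.exp ((2 : ℝ) ^ (-(⌊Real.logb 2 ((M (t - 1) : ℝ) / eps t)⌋ + 1)))
  nn_pos : ∀ t, 1 ≤ t → 0 < nn t
  prop_star : ∀ t, 1 ≤ t → ∀ a ∈ Aset lam nn (t - 1), a ^ 2 ≤ lam t ^ ((nn t : ℝ) / 4)
  N_def : ∀ t, 1 ≤ t → N t = M (t - 1) + nn t
  m_def : ∀ t, 1 ≤ t → m t = N t * (2 + 2 ^ (3 * N t))
  M_def : ∀ t, 1 ≤ t → M t = N t + m t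

/-- `P` is the product measure `∏_k P_k` of Kosloff's construction, where `p k = P_k({0})`:
`p k = 1/2` for `k ≥ 0`, `p k = 1/(1+λ_t)` for `-N_t < k ≤ -M_{t-1}`, and `p k = 1/2`
for `-M_t < k ≤ -N_t`; cylinders get product mass. -/
def IsKosloffMeasure (D : KosloffData) (p : ℤ → ℝ) (P : Measure Xspace) : Prop :=
  IsProbabilityMeasure P ∧
  (∀ k : ℤ, 0 ≤ k → p k = 1 / 2) ∧
  (∀ t : ℕ, 1 ≤ t → ∀ k : ℤ, -(D.N t : ℤ) < k → k ≤ -(D.M (t - 1) : ℤ) →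
      p k = 1 / (1 + D.lam t)) ∧
  (∀ t : ℕ, 1 ≤ t → ∀ k : ℤ, -(D.M t : ℤ) < k → k ≤ -(D.N t : ℤ) → p k = 1 / 2) ∧
  (∀ k l : ℤ, ∀ b : ℤ → Bool,
    P {w : Xspace | ∀ i ∈ Finset.Icc k l, w i = b i}
      = ∏ i ∈ Finset.Icc k l, ENNReal.ofReal (coordWt (p i) (b i)))

/-- The Radon–Nikodym derivative `(Tⁿ)' = d(P∘Tⁿ)/dP`. -/
def rnD (P : Measure Xspace) (n : ℕ) : Xspace → ENNReal :=
  Measure.rnDeriv (Measure.map (shiftInv^[n]) P) P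

/-- `T` is nonsingular: `P∘T` and `P` are mutually absolutely continuous. -/
def ShiftNonsingular (P : Measure Xspace) : Prop :=
  Measure.map shiftInv P ≪ P ∧ P ≪ Measure.map shiftInv P

/-- The ratio set `R(T,P)` of the shift. -/
def ratioSet (P : Measure Xspace) : Set ℝ :=
  {a | 0 ≤ a ∧ ∀ A : Set Xspace, MeasurableSet A → 0 < P A → ∀ ε : ℝ, 0 < ε → ∃ n : ℕ,
      0 < P (A ∩ shiftT^[n] ⁻¹' A ∩ {w | |(rnD P n w).toReal - a| ≤ ε})}

/-- `t(n) = min {t ≥ 1 : n < N_t}`. -/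
def tOf (D : KosloffData) (n : ℕ) : ℕ := sInf {t : ℕ | 1 ≤ t ∧ n < D.N t}

/-- `Υ_u(w) = ∑_{k=-N_u+1}^{-M_{u-1}} w_k`. -/
def Ups (D : KosloffData) (u : ℕ) (w : Xspace) : ℤ :=
  ∑ k ∈ Finset.Icc (-(D.N u : ℤ) + 1) (-(D.M (u - 1) : ℤ)), (if w k then 1 else 0)

/-- `f_t(w) = ∏_{u=1}^t λ_u^{Υ_u(w)}`. -/
def fT (D : KosloffData) (t : ℕ) (w : Xspace) : ℝ :=
  ∏ u ∈ Finset.Icc 1 t, D.lam u ^ Ups D u w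

/-- The ratio `P_{k-n}({w_k}) / P_k({w_k})`. -/
def rr (p : ℤ → ℝ) (n : ℕ) (w : Xspace) (k : ℤ) : ℝ :=
  coordWt (p (k - n)) (w k) / coordWt (p k) (w k)

/-- A general product measure on `{0,1}^ℤ` with `q k = P_k({1})`. -/
def IsProductMeasure (q : ℤ → ℝ) (P : Measure Xspace) : Prop :=
  IsProbabilityMeasure P ∧
  ∀ k l : ℤ, ∀ b : ℤ → Bool,
    P {w : Xspace | ∀ i ∈ Finset.Icc k l, w i = b i}
      = ∏ i ∈ Finset.Icc k l, ENNReal.ofReal (if b i then q i else 1 - q i)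

/-! ### Cylinders -/

def DepOn (F : Finset ℤ) (s : Set Xspace) : Prop :=
  ∀ w w' : Xspace, (∀ i ∈ F, w i = w' i) → (w ∈ s ↔ w' ∈ s)

def cyl (F : Finset ℤ) (b : Xspace) : Set Xspace := {w | ∀ i ∈ F, w i = b i}

lemma mem_cyl {F : Finset ℤ} {b w : Xspace} : w ∈ cyl F b ↔ ∀ i ∈ F, w i = b i := Iff.rfl

lemma DepOn.eq_preimage {F : Finset ℤ} {s : Set Xspace} (h : DepOn F s) :
    s = F.restrict ⁻¹' (F.restrict '' s) := by
  apply Set.Subset.antisymm (Set.subset_preimage_image _ _)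
  rintro w ⟨w', hw', he⟩
  refine (h w' w ?_).1 hw'
  intro i hi
  exact congrFun he ⟨i, hi⟩

lemma DepOn.measurableSet {F : Finset ℤ} {s : Set Xspace} (h : DepOn F s) :
    MeasurableSet s := by
  rw [h.eq_preimage]
  exact (Finset.measurable_restrict F) (Set.toFinite _).measurableSet

lemma DepOn.mono {F G : Finset ℤ} {s : Set Xspace} (h : DepOn F s) (hFG : F ⊆ G) :
    DepOn G s := fun w w' hw => h w w' fun i hi => hw i (hFG hi)

lemma DepOn.inter {F : Finset ℤ} {s t : Set Xspace} (h : DepOn F s) (h' : DepOn F t) :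
    DepOn F (s ∩ t) := fun w w' hw => and_congr (h w w' hw) (h' w w' hw)

lemma DepOn.union {F : Finset ℤ} {s t : Set Xspace} (h : DepOn F s) (h' : DepOn F t) :
    DepOn F (s ∪ t) := fun w w' hw => or_congr (h w w' hw) (h' w w' hw)

lemma DepOn.diff {F : Finset ℤ} {s t : Set Xspace} (h : DepOn F s) (h' : DepOn F t) :
    DepOn F (s \ t) := fun w w' hw => and_congr (h w w' hw) (not_congr (h' w w' hw))

lemma depOn_cyl (F : Finset ℤ) (b : Xspace) : DepOn F (cyl F b) := by
  intro w w' hw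
  simp only [mem_cyl]
  exact forall₂_congr fun i hi => by rw [hw i hi]

lemma measurableSet_cyl (F : Finset ℤ) (b : Xspace) : MeasurableSet (cyl F b) :=
  (depOn_cyl F b).measurableSet

def trunc (F : Finset ℤ) (w : Xspace) : Xspace := fun i => decide (i ∈ F) && w i

lemma trunc_apply {F : Finset ℤ} {w : Xspace} {i : ℤ} (hi : i ∈ F) : trunc F w i = w i := by
  simp [trunc, hi]

lemma finite_range_trunc (F : Finset ℤ) : (Set.range (trunc F)).Finite := by
  have : Set.range (trunc F) ⊆ Set.range (fun (b : F → Bool) (i : ℤ) =>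
      if h : i ∈ F then b ⟨i, h⟩ else false) := by
    rintro _ ⟨w, rfl⟩
    refine ⟨fun i => w i, ?_⟩
    ext i
    by_cases h : i ∈ F <;> simp [trunc, h]
  exact (Set.finite_range _).subset this

def pats (F : Finset ℤ) : Finset Xspace := (finite_range_trunc F).toFinset

lemma mem_pats {F : Finset ℤ} {b : Xspace} : b ∈ pats F ↔ trunc F b = b := by
  simp only [pats, Set.Finite.mem_toFinset, Set.mem_range]
  constructor
  · rintro ⟨w, rfl⟩
    ext i; simp [trunc]
  · intro h; exact ⟨b, h⟩

lemma trunc_mem_pats (F : Finset ℤ) (b : Xspace) : trunc F b ∈ pats F := by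
  simp [pats]

lemma mem_cyl_trunc (F : Finset ℤ) (w : Xspace) : w ∈ cyl F (trunc F w) := by
  intro i hi; rw [trunc_apply hi]

lemma eq_trunc_of_mem {F : Finset ℤ} {b w : Xspace} (hb : b ∈ pats F) (hw : w ∈ cyl F b) :
    b = trunc F w := by
  rw [← mem_pats.1 hb]
  ext i
  by_cases h : i ∈ F
  · rw [trunc_apply h, trunc_apply h, hw i h]
  · simp [trunc, h]

lemma pats_disjoint {F : Finset ℤ} {b b' : Xspace} (hb : b ∈ pats F) (hb' : b' ∈ pats F)
    (h : b ≠ b') : Disjoint (cyl F b) (cyl F b') := by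
  rw [Set.disjoint_left]
  intro w hw hw'
  exact h ((eq_trunc_of_mem hb hw).trans (eq_trunc_of_mem hb' hw').symm)

open Classical in
lemma DepOn.measure_eq {F : Finset ℤ} {t : Set Xspace} (h : DepOn F t) (μ : Measure Xspace) :
    μ t = ∑ b ∈ (pats F).filter (· ∈ t), μ (cyl F b) := by
  rw [← measure_biUnion_finset]
  · congr 1
    ext w
    simp only [Set.mem_iUnion, Finset.mem_filter, exists_prop]
    constructor
    · intro hw
      refine ⟨trunc F w, ⟨trunc_mem_pats F w, ?_⟩, mem_cyl_trunc F w⟩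
      exact (h w _ (mem_cyl_trunc F w)).1 hw
    · rintro ⟨b, ⟨_, hb⟩, hw⟩
      exact (h w b hw).2 hb
  · intro b hb b' hb' hne
    simp only [Finset.coe_filter, Set.mem_ofPred_eq] at hb hb'
    exact pats_disjoint hb.1 hb'.1 hne
  · intro b _; exact measurableSet_cyl F b

open Classical in
lemma DepOn.real_eq {F : Finset ℤ} {t : Set Xspace} (h : DepOn F t) (μ : Measure Xspace)
    [IsFiniteMeasure μ] :
    μ.real t = ∑ b ∈ (pats F).filter (· ∈ t), μ.real (cyl F b) := by
  rw [measureReal_def, h.measure_eq, ENNReal.toReal_sum (fun _ _ => measure_ne_top _ _)]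
  rfl

def win (K : ℕ) : Finset ℤ := Finset.Icc (-(K : ℤ)) K

lemma win_mono {K K' : ℕ} (h : K ≤ K') : win K ⊆ win K' := by
  apply Finset.Icc_subset_Icc <;> omega

lemma exists_win (F : Finset ℤ) : ∃ K : ℕ, F ⊆ win K := by
  refine ⟨F.sup Int.natAbs, fun i hi => ?_⟩
  have := Finset.le_sup (f := Int.natAbs) hi
  simp only [win, Finset.mem_Icc]
  omega

lemma approx_cyl (μ : Measure Xspace) [IsFiniteMeasure μ] {s : Set Xspace} (hs : MeasurableSet s)
    {ε : ℝ} (hε : 0 < ε) :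
    ∃ (K : ℕ) (t : Set Xspace), DepOn (win K) t ∧ μ.real (symmDiff s t) < ε := by
  have hd := Measure.MeasureDense.of_generateFrom_isSetAlgebra_finite μ
    (𝒜 := measurableCylinders (fun _ : ℤ => Bool)) isSetAlgebra_measurableCylinders
    generateFrom_measurableCylinders.symm
  obtain ⟨t, ht, h⟩ := hd.approx s hs (measure_ne_top _ _) ε hε
  obtain ⟨F, S, -, rfl⟩ := (mem_measurableCylinders _).1 ht
  obtain ⟨K, hK⟩ := exists_win F
  refine ⟨K, cylinder F S, ?_, ?_⟩
  · refine DepOn.mono (F := F) ?_ hK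
    intro w w' hw
    simp only [mem_cylinder]
    have : F.restrict w = F.restrict w' := by ext i; exact hw i i.2
    rw [this]
  · rw [measureReal_def]
    exact (ENNReal.lt_ofReal_iff_toReal_lt (measure_ne_top _ _)).1 h

lemma le_of_cyl_le (μ ν : Measure Xspace) [IsFiniteMeasure μ] [IsFiniteMeasure ν] (K₀ : ℕ)
    (h : ∀ K, K₀ ≤ K → ∀ b, μ (cyl (win K) b) ≤ ν (cyl (win K) b)) : μ ≤ ν := by
  refine Measure.le_iff.2 fun s hs => ?_
  rw [← ENNReal.ofReal_toReal (measure_ne_top μ s), ← ENNReal.ofReal_toReal (measure_ne_top ν s)]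
  apply ENNReal.ofReal_le_ofReal
  refine le_of_forall_pos_le_add fun ε hε => ?_
  obtain ⟨K, t, ht, hlt⟩ := approx_cyl (μ + ν) hs (half_pos hε)
  have ht' := ht.mono (win_mono (le_max_left K K₀))
  have h1 : μ.real t ≤ ν.real t := by
    rw [ht'.real_eq, ht'.real_eq]
    refine Finset.sum_le_sum fun b _ => ?_
    exact ENNReal.toReal_mono (measure_ne_top _ _) (h _ (le_max_right _ _) b)
  have h0 : (μ + ν).real (symmDiff s t) = μ.real (symmDiff s t) + ν.real (symmDiff s t) := by
    rw [measureReal_add_apply]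
  have h2 : μ.real s ≤ μ.real t + μ.real (symmDiff s t) := by
    refine (measureReal_mono (s₂ := t ∪ symmDiff s t) ?_).trans (measureReal_union_le _ _)
    intro x hx
    by_cases hxt : x ∈ t
    · exact Or.inl hxt
    · exact Or.inr (Or.inl ⟨hx, hxt⟩)
  have h3 : ν.real t ≤ ν.real s + ν.real (symmDiff s t) := by
    refine (measureReal_mono (s₂ := s ∪ symmDiff s t) ?_).trans (measureReal_union_le _ _)
    intro x hx
    by_cases hxt : x ∈ s
    · exact Or.inl hxt
    · exact Or.inr (Or.inr ⟨hx, hxt⟩)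
  have h4 : 0 ≤ μ.real (symmDiff s t) := measureReal_nonneg
  have h5 : 0 ≤ ν.real (symmDiff s t) := measureReal_nonneg
  change μ.real s ≤ ν.real s + ε
  linarith
/-! ### The product measure -/

def Gf (θ : ℝ) (x : Bool) : ℝ := (if x then θ else 0) - Real.log ((1 + Real.exp θ) / 2)

def wt (θ : ℝ) (x : Bool) : ℝ := Real.exp (Gf θ x) / 2

def qf (θ : ℝ) : ℝ := Real.exp θ / (1 + Real.exp θ)

lemma Gf_zero (x : Bool) : Gf 0 x = 0 := by
  cases x <;> norm_num [Gf]

lemma wt_pos (θ : ℝ) (x : Bool) : 0 < wt θ x := by unfold wt; positivity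

lemma wt_zero (x : Bool) : wt 0 x = 1 / 2 := by simp [wt, Gf_zero]

lemma wt_true (θ : ℝ) : wt θ true = qf θ := by
  have : 0 < Real.exp θ := Real.exp_pos θ
  simp only [wt, Gf, qf, if_true]
  rw [Real.exp_sub, Real.exp_log (by positivity)]
  field_simp

lemma wt_false (θ : ℝ) : wt θ false = 1 - qf θ := by
  have : 0 < Real.exp θ := Real.exp_pos θ
  simp only [wt, Gf, qf]
  rw [if_neg (by simp), zero_sub, Real.exp_neg, Real.exp_log (by positivity)]
  field_simp
  ring

lemma Gf_lip_aux {a b : ℝ} (h : b ≤ a) (x : Bool) : |Gf a x - Gf b x| ≤ a - b := by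
  have h1 : Real.log ((1 + Real.exp b) / 2) ≤ Real.log ((1 + Real.exp a) / 2) := by
    have := Real.exp_pos b
    gcongr
  have h2 : Real.log ((1 + Real.exp a) / 2) ≤ Real.log ((1 + Real.exp b) / 2) + (a - b) := by
    have hb := Real.exp_pos b
    have ha := Real.exp_pos a
    rw [← Real.log_exp (a - b), ← Real.log_mul (by positivity) (by positivity)]
    apply Real.log_le_log (by positivity)
    have h3 : 1 ≤ Real.exp (a - b) := Real.one_le_exp (by linarith)
    have h4 : Real.exp a = Real.exp b * Real.exp (a - b) := by
      rw [← Real.exp_add]; ring_nf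
    rw [h4]
    linarith
  rw [abs_le]
  cases x <;> simp [Gf] <;> constructor <;> linarith

lemma Gf_lip (a b : ℝ) (x : Bool) : |Gf a x - Gf b x| ≤ |a - b| := by
  rcases le_total b a with h | h
  · exact (Gf_lip_aux h x).trans (le_abs_self _)
  · rw [abs_sub_comm, abs_sub_comm a b]
    exact (Gf_lip_aux h x).trans (le_abs_self _)

def bern (θ : ℝ) : Measure Bool :=
  ENNReal.ofReal (wt θ true) • Measure.dirac true + ENNReal.ofReal (wt θ false) • Measure.dirac false

instance (θ : ℝ) : IsProbabilityMeasure (bern θ) := by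
  constructor
  simp only [bern, Measure.coe_add, Measure.coe_smul, Pi.add_apply, Pi.smul_apply, measure_univ,
    smul_eq_mul, mul_one]
  rw [← ENNReal.ofReal_add (wt_pos _ _).le (wt_pos _ _).le, wt_true, wt_false]
  simp

lemma bern_singleton (θ : ℝ) (x : Bool) : bern θ {x} = ENNReal.ofReal (wt θ x) := by
  cases x <;> simp [bern]

def Pm (th : ℤ → ℝ) : Measure Xspace := Measure.infinitePi (fun k => bern (th k))

instance (th : ℤ → ℝ) : IsProbabilityMeasure (Pm th) := by unfold Pm; infer_instance

lemma Pm_cyl (th : ℤ → ℝ) (F : Finset ℤ) (b : Xspace) :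
    Pm th (cyl F b) = ENNReal.ofReal (∏ i ∈ F, wt (th i) (b i)) := by
  have : cyl F b = Set.pi (F : Set ℤ) (fun i => {b i}) := by
    ext w; simp [cyl, Set.mem_pi]
  rw [this, Pm, Measure.infinitePi_pi _ (fun i _ => measurableSet_singleton _),
    ENNReal.ofReal_prod_of_nonneg (fun i _ => (wt_pos _ _).le)]
  exact Finset.prod_congr rfl fun i _ => bern_singleton _ _

lemma Pm_real_cyl (th : ℤ → ℝ) (F : Finset ℤ) (b : Xspace) :
    (Pm th).real (cyl F b) = ∏ i ∈ F, wt (th i) (b i) := by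
  rw [measureReal_def, Pm_cyl, ENNReal.toReal_ofReal]
  exact Finset.prod_nonneg fun i _ => (wt_pos _ _).le

lemma Pm_indep (th : ℤ → ℝ) {F G : Finset ℤ} (hFG : Disjoint F G) {s t : Set Xspace}
    (hs : DepOn F s) (ht : DepOn G t) :
    (Pm th).real (s ∩ t) = (Pm th).real s * (Pm th).real t := by
  have hi : ProbabilityTheory.iIndepFun (fun (i : ℤ) (w : Xspace) => w i) (Pm th) :=
    ProbabilityTheory.iIndepFun_infinitePi (P := fun k => bern (th k)) (X := fun _ x => x)
      (fun i => measurable_id)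
  have h2 := hi.indepFun_finset F G hFG (fun i => measurable_pi_apply i)
  rw [ProbabilityTheory.indepFun_iff_measure_inter_preimage_eq_mul] at h2
  have h3 := h2 (F.restrict '' s) (G.restrict '' t) (Set.toFinite _).measurableSet
    (Set.toFinite _).measurableSet
  have e1 : (fun (a : Xspace) (i : F) => a i) ⁻¹' (F.restrict '' s) = s := hs.eq_preimage.symm
  have e2 : (fun (a : Xspace) (i : G) => a i) ⁻¹' (G.restrict '' t) = t := ht.eq_preimage.symm
  rw [e1, e2] at h3
  simp only [measureReal_def, h3, ENNReal.toReal_mul]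

lemma shiftInv_iter (n : ℕ) (w : Xspace) (i : ℤ) : shiftInv^[n] w i = w (i - n) := by
  induction n generalizing i with
  | zero => simp
  | succ n ih =>
    rw [Function.iterate_succ_apply', shiftInv, ih]
    congr 1; push_cast; ring

lemma shiftT_iter (n : ℕ) (w : Xspace) (i : ℤ) : shiftT^[n] w i = w (i + n) := by
  induction n generalizing i with
  | zero => simp
  | succ n ih =>
    rw [Function.iterate_succ_apply', shiftT, ih]
    congr 1; push_cast; ring

lemma measurable_shiftInv_iter (n : ℕ) : Measurable (shiftInv^[n]) := by
  apply Measurable.iterate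
  exact measurable_pi_lambda _ fun i => measurable_pi_apply _

lemma measurable_shiftT_iter (n : ℕ) : Measurable (shiftT^[n]) := by
  apply Measurable.iterate
  exact measurable_pi_lambda _ fun i => measurable_pi_apply _

lemma shiftT_shiftInv (n : ℕ) (w : Xspace) : shiftT^[n] (shiftInv^[n] w) = w := by
  ext i; rw [shiftT_iter, shiftInv_iter]; simp

lemma shiftInv_shiftT (n : ℕ) (w : Xspace) : shiftInv^[n] (shiftT^[n] w) = w := by
  ext i; rw [shiftInv_iter, shiftT_iter]; simp

def nu (th : ℤ → ℝ) (n : ℕ) : Measure Xspace := Measure.map (shiftInv^[n]) (Pm th)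

instance (th : ℤ → ℝ) (n : ℕ) : IsProbabilityMeasure (nu th n) :=
  Measure.isProbabilityMeasure_map (measurable_shiftInv_iter n).aemeasurable

lemma nu_apply (th : ℤ → ℝ) (n : ℕ) {s : Set Xspace} (hs : MeasurableSet s) :
    nu th n s = Pm th (shiftInv^[n] ⁻¹' s) := Measure.map_apply (measurable_shiftInv_iter n) hs

lemma nu_cyl (th : ℤ → ℝ) (n : ℕ) (F : Finset ℤ) (b : Xspace) :
    nu th n (cyl F b) = ENNReal.ofReal (∏ i ∈ F, wt (th (i - n)) (b i)) := by
  have : shiftInv^[n] ⁻¹' (cyl F b) = cyl (F.image (fun i => i - (n : ℤ))) (fun i => b (i + n)) := by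
    ext w
    simp [cyl, shiftInv_iter]
  rw [nu_apply th n (measurableSet_cyl F b), this, Pm_cyl, Finset.prod_image (by simp)]
  simp

/-- Properties of the parameter sequence. -/
structure Good (τ : ℕ → ℝ) (th : ℤ → ℝ) : Prop where
  anti : Antitone τ
  nonneg : ∀ m, 0 ≤ τ m
  zero : ∀ k : ℤ, 0 ≤ k → th k = 0
  neg : ∀ m : ℕ, 1 ≤ m → th (-(m : ℤ)) = τ m

lemma Good.neg' {τ : ℕ → ℝ} {th : ℤ → ℝ} (h : Good τ th) {k : ℤ} (hk : k < 0) :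
    th k = τ (-k).toNat := by
  rw [← h.neg _ (by omega)]
  congr 1; omega

lemma telescope (φ : ℤ → ℝ) (B : ℝ) (h0 : ∀ k, 0 ≤ φ k) (hB : ∀ k, φ k ≤ B)
    (K : ℕ) (n : ℕ) :
    ∑ k ∈ win K, (φ k - φ (k - n)) ≤ n * B := by
  have key : ∀ (a : ℤ) (m : ℕ), ∑ k ∈ Finset.Ico a (a + m), (φ k - φ (k - 1)) =
      φ (a + m - 1) - φ (a - 1) := by
    intro a m
    induction m with
    | zero => simp
    | succ m ih =>
      have : Finset.Ico a (a + (m + 1 : ℕ)) = insert (a + m : ℤ) (Finset.Ico a (a + m)) := by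
        ext x; simp only [Finset.mem_Ico, Finset.mem_insert]; push_cast; omega
      rw [this, Finset.sum_insert (by simp), ih]
      push_cast
      ring_nf
  have hwin : win K = Finset.Ico (-(K : ℤ)) (-(K : ℤ) + (2 * K + 1 : ℕ)) := by
    ext x; simp only [win, Finset.mem_Icc, Finset.mem_Ico]; push_cast; omega
  induction n with
  | zero => simp
  | succ n ih =>
    have hs : ∑ k ∈ win K, (φ (k - n) - φ (k - n - 1)) ≤ B := by
      have := key (-(K : ℤ) - n) (2 * K + 1)
      have h2 : ∑ k ∈ win K, (φ (k - n) - φ (k - n - 1)) =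
          ∑ k ∈ Finset.Ico (-(K : ℤ) - n) (-(K : ℤ) - n + (2 * K + 1 : ℕ)), (φ k - φ (k - 1)) := by
        rw [hwin]
        refine Finset.sum_bij (fun k _ => k - n) ?_ ?_ ?_ ?_
        · intro k hk; simp only [Finset.mem_Ico] at hk ⊢; omega
        · intro a _ b _ h; simpa using h
        · intro k hk
          refine ⟨k + n, ?_, by ring⟩
          simp only [Finset.mem_Ico] at hk ⊢; omega
        · intro k _; rfl
      rw [h2, this]
      linarith [hB (-(K : ℤ) - n + (2 * K + 1 : ℕ) - 1), h0 (-(K : ℤ) - n - 1)]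
    have : ∑ k ∈ win K, (φ k - φ (k - (n + 1 : ℕ))) =
        ∑ k ∈ win K, (φ k - φ (k - n)) + ∑ k ∈ win K, (φ (k - n) - φ (k - n - 1)) := by
      rw [← Finset.sum_add_distrib]
      refine Finset.sum_congr rfl fun k _ => ?_
      push_cast
      rw [show k - ((n : ℤ) + 1) = k - n - 1 by ring]
      ring
    rw [this]
    push_cast
    linarith

lemma Good.var {τ : ℕ → ℝ} {th : ℤ → ℝ} (h : Good τ th) (N n K : ℕ) :
    ∑ k ∈ win K, |(if k - n < -(N : ℤ) then th (k - n) else 0) -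
      (if k < -(N : ℤ) then th k else 0)| ≤ n * (2 * τ (N + 1)) := by
  set φ : ℤ → ℝ := fun k => if k < -(N : ℤ) then th k else 2 * τ (N + 1) with hφ
  have hle : ∀ k : ℤ, k < -(N : ℤ) → 0 ≤ th k ∧ th k ≤ τ (N + 1) := by
    intro k hk
    rw [h.neg' (by omega)]
    exact ⟨h.nonneg _, h.anti (by omega)⟩
  have hτ := h.nonneg (N + 1)
  have hmono' : ∀ k l : ℤ, k ≤ l → l < -(N : ℤ) → th k ≤ th l := by
    intro k l hkl hl
    rw [h.neg' (by omega), h.neg' (by omega)]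
    exact h.anti (by omega)
  refine le_trans (Finset.sum_le_sum fun k _ => ?_) (telescope φ (2 * τ (N + 1)) ?_ ?_ K n)
  · simp only [hφ]
    split_ifs with h1 h2 h2
    · rw [abs_sub_comm, abs_of_nonneg]
      linarith [hmono' (k - n) k (by omega) h2]
    · rw [sub_zero, abs_of_nonneg (hle _ h1).1]
      linarith [(hle _ h1).2]
    · omega
    · simp
  · intro k; simp only [hφ]; split_ifs with h1
    · exact (hle k h1).1
    · linarith
  · intro k; simp only [hφ]; split_ifs with h1
    · linarith [(hle k h1).2]
    · exact le_rfl

/-- The main part of the logarithmic derivative. -/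
def Lg (th : ℤ → ℝ) (N n : ℕ) (b : Xspace) : ℝ :=
  ∑ i ∈ win N, (Gf (th i) (b (i + n)) - Gf (th i) (b i))

lemma Good.compare {τ : ℕ → ℝ} {th : ℤ → ℝ} (h : Good τ th) {N n K : ℕ} (hK : N + n ≤ K)
    (b : Xspace) :
    |∑ k ∈ win K, (Gf (th (k - n)) (b k) - Gf (th k) (b k)) - Lg th N n b| ≤
      n * (2 * τ (N + 1)) := by
  set r : ℤ → ℝ := fun k => if k < -(N : ℤ) then th k else 0 with hr
  set m : ℤ → ℝ := fun k => if k < -(N : ℤ) then 0 else th k with hm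
  have hsplit : ∀ k x, Gf (th k) x = Gf (r k) x + Gf (m k) x := by
    intro k x
    simp only [hr, hm]
    split_ifs <;> simp [Gf_zero]
  have hm0 : ∀ k, k ∉ win N → m k = 0 := by
    intro k hk
    simp only [win, Finset.mem_Icc] at hk
    simp only [hm]
    split_ifs with h1
    · rfl
    · exact h.zero k (by omega)
  have hm1 : ∀ k, k ∈ win N → m k = th k := by
    intro k hk
    simp only [win, Finset.mem_Icc] at hk
    simp only [hm]
    rw [if_neg (by omega)]
  have e1 : ∑ k ∈ win K, Gf (m k) (b k) = ∑ i ∈ win N, Gf (th i) (b i) := by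
    rw [← Finset.sum_subset (win_mono (show N ≤ K by omega))]
    · exact Finset.sum_congr rfl fun i hi => by rw [hm1 i hi]
    · intro i _ hi; rw [hm0 i hi, Gf_zero]
  have e2 : ∑ k ∈ win K, Gf (m (k - n)) (b k) = ∑ i ∈ win N, Gf (th i) (b (i + n)) := by
    have : ∑ i ∈ win N, Gf (th i) (b (i + n)) =
        ∑ k ∈ (win N).image (fun i => i + (n : ℤ)), Gf (m (k - n)) (b k) := by
      rw [Finset.sum_image (by simp)]
      refine Finset.sum_congr rfl fun i hi => ?_
      rw [add_sub_cancel_right, hm1 i hi]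
    rw [this]
    symm
    apply Finset.sum_subset
    · intro k hk
      simp only [win, Finset.mem_image, Finset.mem_Icc] at hk ⊢
      omega
    · intro k _ hk
      rw [hm0, Gf_zero]
      intro hk'
      exact hk (Finset.mem_image.2 ⟨k - n, hk', by ring⟩)
  have e3 : ∑ k ∈ win K, (Gf (th (k - n)) (b k) - Gf (th k) (b k)) - Lg th N n b =
      ∑ k ∈ win K, (Gf (r (k - n)) (b k) - Gf (r k) (b k)) := by
    have e4 : Lg th N n b = ∑ k ∈ win K, (Gf (m (k - n)) (b k) - Gf (m k) (b k)) := by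
      rw [Lg, Finset.sum_sub_distrib, Finset.sum_sub_distrib, e1, e2]
    rw [e4, ← Finset.sum_sub_distrib]
    refine Finset.sum_congr rfl fun k _ => ?_
    rw [hsplit, hsplit (k)]
    ring
  rw [e3]
  refine (Finset.abs_sum_le_sum_abs _ _).trans (le_trans ?_ (h.var N n K))
  exact Finset.sum_le_sum fun k _ => Gf_lip _ _ _

lemma prod_wt (F : Finset ℤ) (th : ℤ → ℝ) (b : Xspace) :
    ∏ k ∈ F, wt (th k) (b k) = Real.exp (∑ k ∈ F, Gf (th k) (b k)) * (1 / 2) ^ F.card := by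
  simp only [wt, div_eq_mul_inv, one_mul]
  rw [Finset.prod_mul_distrib, Finset.prod_const, Real.exp_sum]

lemma Good.cyl_le {τ : ℕ → ℝ} {th : ℤ → ℝ} (h : Good τ th) {N n K : ℕ} (hK : N + n ≤ K)
    (b : Xspace) :
    nu th n (cyl (win K) b) ≤
      ENNReal.ofReal (Real.exp (Lg th N n b + n * (2 * τ (N + 1)))) * Pm th (cyl (win K) b) := by
  rw [nu_cyl, Pm_cyl, ← ENNReal.ofReal_mul (Real.exp_pos _).le]
  apply ENNReal.ofReal_le_ofReal
  rw [prod_wt (win K) (fun k => th (k - n)), prod_wt, ← mul_assoc, ← Real.exp_add]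
  gcongr
  have := (abs_le.1 (h.compare hK b)).2
  rw [Finset.sum_sub_distrib] at this
  linarith

lemma Good.le_cyl {τ : ℕ → ℝ} {th : ℤ → ℝ} (h : Good τ th) {N n K : ℕ} (hK : N + n ≤ K)
    (b : Xspace) :
    ENNReal.ofReal (Real.exp (Lg th N n b - n * (2 * τ (N + 1)))) * Pm th (cyl (win K) b) ≤
      nu th n (cyl (win K) b) := by
  rw [nu_cyl, Pm_cyl, ← ENNReal.ofReal_mul (Real.exp_pos _).le]
  apply ENNReal.ofReal_le_ofReal
  rw [prod_wt (win K) (fun k => th (k - n)), prod_wt, ← mul_assoc, ← Real.exp_add]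
  gcongr
  have := (abs_le.1 (h.compare hK b)).1
  rw [Finset.sum_sub_distrib] at this
  linarith
/-! ### Comparison of `P ∘ Tⁿ` with `P` -/

def shc (n N : ℕ) (v : Xspace) : Set Xspace := {w | ∀ i ∈ win N, w (i + n) = v i}

lemma depOn_shc' (n N : ℕ) (v : Xspace) :
    DepOn ((win N).image (fun i => i + (n : ℤ))) (shc n N v) := by
  intro w w' hw
  refine forall₂_congr fun i hi => ?_
  rw [hw (i + n) (Finset.mem_image_of_mem _ hi)]

lemma depOn_shc (n N : ℕ) (v : Xspace) : DepOn (win (N + n)) (shc n N v) := by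
  refine (depOn_shc' n N v).mono ?_
  intro k hk
  simp only [win, Finset.mem_image, Finset.mem_Icc] at hk ⊢
  push_cast
  omega

def LL (th : ℤ → ℝ) (N : ℕ) (u v : Xspace) : ℝ :=
  ∑ i ∈ win N, (Gf (th i) (v i) - Gf (th i) (u i))

lemma Lg_eq {th : ℤ → ℝ} {N n : ℕ} {u v b : Xspace} (h1 : b ∈ cyl (win N) u)
    (h2 : b ∈ shc n N v) : Lg th N n b = LL th N u v :=
  Finset.sum_congr rfl fun i hi => by rw [h1 i hi, h2 i hi]

def EE (N n : ℕ) (u v : Xspace) : Set Xspace := cyl (win N) u ∩ shc n N v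

lemma depOn_EE (N n : ℕ) (u v : Xspace) : DepOn (win (N + n)) (EE N n u v) :=
  ((depOn_cyl _ _).mono (win_mono (by omega))).inter (depOn_shc n N v)

lemma Good.nu_le {τ : ℕ → ℝ} {th : ℤ → ℝ} (h : Good τ th) (N n : ℕ) (u v : Xspace)
    {S : Set Xspace} (hS : S ⊆ EE N n u v) (hm : MeasurableSet S) :
    nu th n S ≤ ENNReal.ofReal (Real.exp (LL th N u v + n * (2 * τ (N + 1)))) * Pm th S := by
  set c := ENNReal.ofReal (Real.exp (LL th N u v + n * (2 * τ (N + 1)))) with hc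
  have hcf : c ≠ ⊤ := ENNReal.ofReal_ne_top
  have : IsFiniteMeasure (c • (Pm th).restrict (EE N n u v)) :=
    Measure.smul_finite _ hcf
  have key : (nu th n).restrict (EE N n u v) ≤ c • (Pm th).restrict (EE N n u v) := by
    refine le_of_cyl_le _ _ (N + n) fun K hK b => ?_
    rw [Measure.smul_apply, Measure.restrict_apply (measurableSet_cyl _ _),
      Measure.restrict_apply (measurableSet_cyl _ _), smul_eq_mul]
    have hd := (depOn_EE N n u v).mono (win_mono hK)
    by_cases hb : b ∈ EE N n u v
    · have : cyl (win K) b ∩ EE N n u v = cyl (win K) b :=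
        Set.inter_eq_left.2 fun w hw => (hd w b hw).2 hb
      rw [this, hc, ← Lg_eq hb.1 hb.2]
      exact h.cyl_le hK b
    · have : cyl (win K) b ∩ EE N n u v = ∅ := by
        ext w
        simp only [Set.mem_inter_iff, Set.mem_empty_iff_false, iff_false, not_and]
        intro hw hw'
        exact hb ((hd w b hw).1 hw')
      simp [this]
  have := key S
  rwa [Measure.smul_apply, Measure.restrict_apply hm, Measure.restrict_apply hm,
    Set.inter_eq_left.2 hS, smul_eq_mul] at this

lemma Good.le_nu {τ : ℕ → ℝ} {th : ℤ → ℝ} (h : Good τ th) (N n : ℕ) (u v : Xspace)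
    {S : Set Xspace} (hS : S ⊆ EE N n u v) (hm : MeasurableSet S) :
    ENNReal.ofReal (Real.exp (LL th N u v - n * (2 * τ (N + 1)))) * Pm th S ≤ nu th n S := by
  set c := ENNReal.ofReal (Real.exp (LL th N u v - n * (2 * τ (N + 1)))) with hc
  have hcf : c ≠ ⊤ := ENNReal.ofReal_ne_top
  have : IsFiniteMeasure (c • (Pm th).restrict (EE N n u v)) :=
    Measure.smul_finite _ hcf
  have key : c • (Pm th).restrict (EE N n u v) ≤ (nu th n).restrict (EE N n u v) := by
    refine le_of_cyl_le _ _ (N + n) fun K hK b => ?_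
    rw [Measure.smul_apply, Measure.restrict_apply (measurableSet_cyl _ _),
      Measure.restrict_apply (measurableSet_cyl _ _), smul_eq_mul]
    have hd := (depOn_EE N n u v).mono (win_mono hK)
    by_cases hb : b ∈ EE N n u v
    · have : cyl (win K) b ∩ EE N n u v = cyl (win K) b :=
        Set.inter_eq_left.2 fun w hw => (hd w b hw).2 hb
      rw [this, hc, ← Lg_eq hb.1 hb.2]
      exact h.le_cyl hK b
    · have : cyl (win K) b ∩ EE N n u v = ∅ := by
        ext w
        simp only [Set.mem_inter_iff, Set.mem_empty_iff_false, iff_false, not_and]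
        intro hw hw'
        exact hb ((hd w b hw).1 hw')
      simp [this]
  have := key S
  rwa [Measure.smul_apply, Measure.restrict_apply hm, Measure.restrict_apply hm,
    Set.inter_eq_left.2 hS, smul_eq_mul] at this

lemma Good.Lg_zero {τ : ℕ → ℝ} {th : ℤ → ℝ} (h : Good τ th) (n : ℕ) (b : Xspace) :
    Lg th 0 n b = 0 := by
  refine Finset.sum_eq_zero fun i hi => ?_
  have : i = 0 := by simp only [win, Finset.mem_Icc] at hi; push_cast at hi; omega
  rw [this, h.zero 0 le_rfl, Gf_zero, Gf_zero, sub_zero]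

lemma Good.nu_ac {τ : ℕ → ℝ} {th : ℤ → ℝ} (h : Good τ th) (n : ℕ) : nu th n ≪ Pm th := by
  set c := ENNReal.ofReal (Real.exp (0 + n * (2 * τ (0 + 1)))) with hc
  have hcf : c ≠ ⊤ := ENNReal.ofReal_ne_top
  have : IsFiniteMeasure (c • (Pm th)) := Measure.smul_finite _ hcf
  have key : nu th n ≤ c • Pm th := by
    refine le_of_cyl_le _ _ (0 + n) fun K hK b => ?_
    have := h.cyl_le hK b
    rwa [h.Lg_zero] at this
  exact (Measure.absolutelyContinuous_of_le key).trans Measure.smul_absolutelyContinuous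

lemma Good.ac_nu {τ : ℕ → ℝ} {th : ℤ → ℝ} (h : Good τ th) (n : ℕ) : Pm th ≪ nu th n := by
  set c := ENNReal.ofReal (Real.exp (0 - n * (2 * τ (0 + 1)))) with hc
  have hcf : c ≠ ⊤ := ENNReal.ofReal_ne_top
  have hc0 : c ≠ 0 := by
    rw [hc, Ne, ENNReal.ofReal_eq_zero, not_le]; exact Real.exp_pos _
  have : IsFiniteMeasure (c • (Pm th)) := Measure.smul_finite _ hcf
  have key : c • Pm th ≤ nu th n := by
    refine le_of_cyl_le _ _ (0 + n) fun K hK b => ?_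
    have := h.le_cyl hK b
    rwa [h.Lg_zero] at this
  exact (Measure.absolutelyContinuous_smul hc0).trans (Measure.absolutelyContinuous_of_le key)

lemma Good.rn {τ : ℕ → ℝ} {th : ℤ → ℝ} (h : Good τ th) (N n : ℕ) (u v : Xspace) :
    ∀ᵐ w ∂(Pm th), w ∈ EE N n u v →
      Real.exp (LL th N u v - n * (2 * τ (N + 1))) ≤ (rnD (Pm th) n w).toReal ∧
      (rnD (Pm th) n w).toReal ≤ Real.exp (LL th N u v + n * (2 * τ (N + 1))) := by
  have hEm : MeasurableSet (EE N n u v) := (depOn_EE N n u v).measurableSet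
  rw [← ae_restrict_iff' hEm]
  have hLD : (nu th n).HaveLebesgueDecomposition (Pm th) :=
    Measure.haveLebesgueDecomposition_of_sigmaFinite _ _
  have hD : Measurable (rnD (Pm th) n) := Measure.measurable_rnDeriv _ _
  have hint : ∀ s, MeasurableSet s →
      ∫⁻ x in s, rnD (Pm th) n x ∂((Pm th).restrict (EE N n u v)) = nu th n (s ∩ EE N n u v) := by
    intro s hs
    rw [Measure.restrict_restrict hs]
    exact Measure.setLIntegral_rnDeriv (h.nu_ac n) _
  have h1 : ∀ᵐ w ∂((Pm th).restrict (EE N n u v)),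
      rnD (Pm th) n w ≤ ENNReal.ofReal (Real.exp (LL th N u v + n * (2 * τ (N + 1)))) := by
    refine ae_le_of_forall_setLIntegral_le_of_sigmaFinite hD fun s hs _ => ?_
    rw [hint s hs, setLIntegral_const, Measure.restrict_apply hs]
    exact h.nu_le N n u v Set.inter_subset_right (hs.inter hEm)
  have h2 : ∀ᵐ w ∂((Pm th).restrict (EE N n u v)),
      ENNReal.ofReal (Real.exp (LL th N u v - n * (2 * τ (N + 1)))) ≤ rnD (Pm th) n w := by
    refine ae_le_of_forall_setLIntegral_le_of_sigmaFinite measurable_const fun s hs _ => ?_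
    rw [hint s hs, setLIntegral_const, Measure.restrict_apply hs]
    exact h.le_nu N n u v Set.inter_subset_right (hs.inter hEm)
  filter_upwards [h1, h2] with w hw1 hw2
  refine ⟨?_, ENNReal.toReal_le_of_le_ofReal (Real.exp_pos _).le hw1⟩
  exact (ENNReal.ofReal_le_iff_le_toReal (ne_top_of_le_ne_top ENNReal.ofReal_ne_top hw1)).1 hw2

lemma no_invariant (P : Measure Xspace) [IsProbabilityMeasure P]
    (hac : ∀ n : ℕ, Measure.map (shiftInv^[n]) P ≪ P) (h2 : (2 : ℝ) ∈ ratioSet P) :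
    ¬ ∃ μ : Measure Xspace, SigmaFinite μ ∧ μ ≪ P ∧ P ≪ μ ∧ Measure.map shiftInv μ = μ := by
  rintro ⟨μ, hσ, hμP, hPμ, hinv⟩
  have hinvn : ∀ n : ℕ, Measure.map (shiftInv^[n]) μ = μ := by
    intro n
    have hmp : MeasurePreserving shiftInv μ μ := ⟨measurable_shiftInv_iter 1, hinv⟩
    exact (hmp.iterate n).map_eq
  set h := P.rnDeriv μ with hh
  have hmeas : Measurable h := Measure.measurable_rnDeriv _ _
  have hint : ∀ s, ∫⁻ x in s, h x ∂μ = P s := fun s => Measure.setLIntegral_rnDeriv hPμ s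
  have hpos : ∀ᵐ x ∂P, 0 < h x := Measure.rnDeriv_pos hPμ
  have hfin : ∀ᵐ x ∂P, h x < ⊤ := hPμ.ae_le (Measure.rnDeriv_lt_top P μ)
  set y : ENNReal := ENNReal.ofReal (6 / 5) with hy
  have hy1 : 1 < y := by rw [hy, ← ENNReal.ofReal_one]; exact (ENNReal.ofReal_lt_ofReal_iff (by norm_num)).2 (by norm_num)
  have hyt : y ≠ ⊤ := ENNReal.ofReal_ne_top
  have hy0 : y ≠ 0 := (zero_lt_one.trans hy1).ne'
  have hex : ∃ k : ℤ, 0 < P (h ⁻¹' Set.Ico (y ^ k) (y ^ (k + 1))) := by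
    by_contra hcon
    push Not at hcon
    have h0 : P (⋃ k : ℤ, h ⁻¹' Set.Ico (y ^ k) (y ^ (k + 1))) = 0 :=
      measure_iUnion_null fun k => le_antisymm (hcon k) bot_le
    have h1 : ∀ᵐ x ∂P, x ∈ ⋃ k : ℤ, h ⁻¹' Set.Ico (y ^ k) (y ^ (k + 1)) := by
      filter_upwards [hpos, hfin] with x hx1 hx2
      obtain ⟨k, hk⟩ := ENNReal.exists_mem_Ico_zpow hx1.ne' hx2.ne hy1 hyt
      exact Set.mem_iUnion.2 ⟨k, hk⟩
    have h3 : ∀ᵐ x ∂P, False := by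
      filter_upwards [h1, measure_eq_zero_iff_ae_notMem.1 h0] with x hx hx'
      exact hx' hx
    have := ae_iff.1 h3
    simp at this
  obtain ⟨k, hk⟩ := hex
  set A := h ⁻¹' Set.Ico (y ^ k) (y ^ (k + 1)) with hA
  have hAm : MeasurableSet A := hmeas measurableSet_Ico
  obtain ⟨n, hn⟩ := h2.2 A hAm hk (1 / 2) (by norm_num)
  set X := A ∩ shiftT^[n] ⁻¹' A ∩ {w | |(rnD P n w).toReal - 2| ≤ 1 / 2} with hX
  have hDm : Measurable (rnD P n) := Measure.measurable_rnDeriv _ _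
  have hXm : MeasurableSet X := by
    refine (hAm.inter (measurable_shiftT_iter n hAm)).inter ?_
    exact measurableSet_le (by fun_prop) measurable_const
  have i1 : ENNReal.ofReal (3 / 2) * P X ≤ Measure.map (shiftInv^[n]) P X := by
    have : IsProbabilityMeasure (Measure.map (shiftInv^[n]) P) :=
      Measure.isProbabilityMeasure_map (measurable_shiftInv_iter n).aemeasurable
    have hLD : (Measure.map (shiftInv^[n]) P).HaveLebesgueDecomposition P :=
      Measure.haveLebesgueDecomposition_of_sigmaFinite _ _
    rw [← Measure.setLIntegral_rnDeriv (hac n) X, ← setLIntegral_const]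
    refine setLIntegral_mono' hXm fun x hx => ?_
    have h3 : |(rnD P n x).toReal - 2| ≤ 1 / 2 := hx.2
    refine ENNReal.ofReal_le_of_le_toReal ?_
    have := (abs_le.1 h3).1
    change 3 / 2 ≤ (rnD P n x).toReal
    linarith
  have i2 : y ^ k * μ X ≤ P X := by
    rw [← hint X, ← setLIntegral_const]
    exact setLIntegral_mono' hXm fun x hx => hx.1.1.1
  have i3 : Measure.map (shiftInv^[n]) P X ≤ y ^ (k + 1) * μ X := by
    have e : μ X = μ (shiftInv^[n] ⁻¹' X) := by
      conv_lhs => rw [← hinvn n, Measure.map_apply (measurable_shiftInv_iter n) hXm]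
    rw [Measure.map_apply (measurable_shiftInv_iter n) hXm, e, ← hint, ← setLIntegral_const]
    refine setLIntegral_mono' (measurable_shiftInv_iter n hXm) fun x hx => ?_
    have h4 : shiftT^[n] (shiftInv^[n] x) ∈ A := hx.1.2
    rw [shiftT_shiftInv] at h4
    exact h4.2.le
  have i4 : ENNReal.ofReal (3 / 2) * P X ≤ y * P X := by
    calc _ ≤ y ^ (k + 1) * μ X := i1.trans i3
      _ = y * (y ^ k * μ X) := by
        rw [ENNReal.zpow_add hy0 hyt, zpow_one]; ring
      _ ≤ _ := by gcongr
  have i5 := ENNReal.toReal_mono (ENNReal.mul_ne_top hyt (measure_ne_top P X)) i4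
  rw [ENNReal.toReal_mul, ENNReal.toReal_mul, hy, ENNReal.toReal_ofReal (by norm_num),
    ENNReal.toReal_ofReal (by norm_num)] at i5
  have i6 : 0 < (P X).toReal := ENNReal.toReal_pos hn.ne' (measure_ne_top _ _)
  linarith
/-! ### First hitting decomposition -/

def Rs (B : Set Xspace) (H0 H1 : ℕ → Set Xspace) : ℕ → Set Xspace
  | 0 => B
  | j + 1 => Rs B H0 H1 j \ (H0 j ∪ H1 j)

lemma Rs_anti (B : Set Xspace) (H0 H1 : ℕ → Set Xspace) {i j : ℕ} (h : i ≤ j) :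
    Rs B H0 H1 j ⊆ Rs B H0 H1 i := by
  induction j, h using Nat.le_induction with
  | base => exact subset_rfl
  | succ j _ ih => exact Set.sdiff_subset.trans ih

lemma Rs_notMem {B : Set Xspace} {H0 H1 : ℕ → Set Xspace} {i j : ℕ} (h : i < j) {w : Xspace}
    (hw : w ∈ Rs B H0 H1 j) : w ∉ H0 i ∧ w ∉ H1 i := by
  have : w ∈ Rs B H0 H1 (i + 1) := Rs_anti B H0 H1 h hw
  have h2 := this.2
  simp only [Set.mem_union, not_or] at h2
  exact h2

lemma first_hit (P : Measure Xspace) [IsProbabilityMeasure P] (B : Set Xspace)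
    (hB : MeasurableSet B) (H0 H1 : ℕ → Set Xspace) (h0m : ∀ j, MeasurableSet (H0 j))
    (h1m : ∀ j, MeasurableSet (H1 j)) (J : ℕ) (hd : ∀ j < J, Disjoint (H0 j) (H1 j)) (q0 q1 : ℝ)
    (h0 : ∀ j < J, P.real (Rs B H0 H1 j ∩ H0 j) = P.real (Rs B H0 H1 j) * q0)
    (h1 : ∀ j < J, P.real (Rs B H0 H1 j ∩ H1 j) = P.real (Rs B H0 H1 j) * q1) :
    (q0 + q1) * ∑ j ∈ Finset.range J, P.real (Rs B H0 H1 j ∩ H0 j) =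
      q0 * (P.real B * (1 - (1 - q0 - q1) ^ J)) := by
  have hRm : ∀ j, MeasurableSet (Rs B H0 H1 j) := by
    intro j
    induction j with
    | zero => exact hB
    | succ j ih => exact ih.diff ((h0m j).union (h1m j))
  have step : ∀ j < J, P.real (Rs B H0 H1 (j + 1)) = P.real (Rs B H0 H1 j) * (1 - q0 - q1) := by
    intro j hj
    have e1 := measureReal_inter_add_sdiff (μ := P) (s := Rs B H0 H1 j) ((h0m j).union (h1m j))
    rw [Set.inter_union_distrib_left, measureReal_union
      (((hd j hj).mono Set.inter_subset_right Set.inter_subset_right))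
      ?_, h0 j hj, h1 j hj] at e1
    · change P.real (Rs B H0 H1 j \ (H0 j ∪ H1 j)) = _
      linarith
    · exact (hRm j).inter (h1m j)
  have pw : ∀ j ≤ J, P.real (Rs B H0 H1 j) = P.real B * (1 - q0 - q1) ^ j := by
    intro j hj
    induction j with
    | zero => simp [Rs]
    | succ j ih => rw [step j (by omega), ih (by omega), pow_succ]; ring
  have : ∀ m ≤ J, (q0 + q1) * ∑ j ∈ Finset.range m, P.real (Rs B H0 H1 j ∩ H0 j) =
      q0 * (P.real B * (1 - (1 - q0 - q1) ^ m)) := by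
    intro m hm
    induction m with
    | zero => simp
    | succ m ih =>
      rw [Finset.sum_range_succ, mul_add, ih (by omega), h0 m (by omega), pw m (by omega)]
      ring
  exact this J le_rfl

lemma card_win (N : ℕ) : (win N).card = 2 * N + 1 := by
  simp [win]; omega

lemma Good.shc_real {τ : ℕ → ℝ} {th : ℤ → ℝ} (h : Good τ th) {N n : ℕ} (hn : N ≤ n) (v : Xspace) :
    (Pm th).real (shc n N v) = (1 / 2) ^ (2 * N + 1) := by
  have e : shc n N v = cyl ((win N).image (fun i => i + (n : ℤ))) (fun i => v (i - n)) := by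
    ext w
    constructor
    · intro hw k hk
      obtain ⟨i, hi, rfl⟩ := Finset.mem_image.1 hk
      rw [hw i hi]; simp
    · intro hw i hi
      have := hw (i + n) (Finset.mem_image_of_mem _ hi)
      simpa using this
  rw [e, Pm_real_cyl, Finset.prod_image (by simp), ← card_win, ← Finset.prod_const]
  refine Finset.prod_congr rfl fun i hi => ?_
  rw [h.zero, wt_zero]
  simp only [win, Finset.mem_Icc] at hi
  omega

lemma Good.pair_ratio {τ : ℕ → ℝ} {th : ℤ → ℝ} (h : Good τ th) {N J : ℕ} {u v : Xspace}
    (huv : ∃ i ∈ win N, u i ≠ v i) {A : Set Xspace} (hA : MeasurableSet A)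
    (hJ : (1 - 2 * (1 / 2 : ℝ) ^ (2 * N + 1)) ^ J ≤ 1 / 2) {δ : ℝ}
    (hu : (Pm th).real (cyl (win N) u \ A) ≤ δ * (Pm th).real (cyl (win N) u))
    (hv : (Pm th).real (cyl (win N) v \ A) ≤ δ * (Pm th).real (cyl (win N) u))
    (hδ : δ < Real.exp (LL th N u v - (J * (2 * N + 1) : ℕ) * (2 * τ (N + 1))) * (1 / 4 - δ)) :
    ∃ n ≤ J * (2 * N + 1), 0 < Pm th (A ∩ shiftT^[n] ⁻¹' A ∩ EE N n u v) := by
  set P := Pm th with hP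
  by_contra hcon
  push Not at hcon
  set L := 2 * N + 1 with hL
  set H0 : ℕ → Set Xspace := fun j => shc ((j + 1) * L) N v with hH0
  set H1 : ℕ → Set Xspace := fun j => shc ((j + 1) * L) N u with hH1
  set R := Rs (cyl (win N) u) H0 H1 with hR
  have hJN : ∀ j, N ≤ (j + 1) * L := by intro j; rw [hL]; nlinarith
  have h0m : ∀ j, MeasurableSet (H0 j) := fun j => (depOn_shc _ _ _).measurableSet
  have h1m : ∀ j, MeasurableSet (H1 j) := fun j => (depOn_shc _ _ _).measurableSet
  have hRd : ∀ j : ℕ, DepOn (Finset.Icc (-(N : ℤ)) (N + j * L)) (R j) := by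
    have hsub : ∀ (j : ℕ) (b : Xspace),
        DepOn (Finset.Icc (-(N : ℤ)) (N + (j + 1 : ℕ) * L)) (shc ((j + 1) * L) N b) := by
      intro j b
      refine (depOn_shc' _ _ _).mono fun k hk => ?_
      simp only [win, Finset.mem_image, Finset.mem_Icc] at hk ⊢
      obtain ⟨i, hi, rfl⟩ := hk
      push_cast
      have : (0 : ℤ) ≤ ((j : ℤ) + 1) * L := by positivity
      constructor <;> linarith [hi.1, hi.2]
    intro j
    induction j with
    | zero =>
      refine (depOn_cyl (win N) u).mono ?_
      simp [win]
    | succ j ih =>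
      refine DepOn.diff (ih.mono ?_) ((hsub j v).union (hsub j u))
      apply Finset.Icc_subset_Icc le_rfl
      push_cast
      have : (0 : ℤ) ≤ L := by positivity
      linarith
  have hind : ∀ (j : ℕ) (b : Xspace), P.real (R j ∩ shc ((j + 1) * L) N b) =
      P.real (R j) * (1 / 2) ^ (2 * N + 1) := by
    intro j b
    rw [hP, Pm_indep th ?_ (hRd j) (depOn_shc' _ _ b), h.shc_real (hJN j)]
    rw [Finset.disjoint_left]
    intro k hk hk'
    simp only [win, Finset.mem_image, Finset.mem_Icc] at hk hk'
    obtain ⟨i, hi, rfl⟩ := hk'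
    push_cast at hk
    have : (L : ℤ) = 2 * N + 1 := by rw [hL]; push_cast; ring
    linarith [hi.1, hi.2, hk.2]
  have hRm : ∀ j, MeasurableSet (R j) := fun j => (hRd j).measurableSet
  have hdj : ∀ j < J, Disjoint (H0 j) (H1 j) := by
    intro j _
    rw [Set.disjoint_left]
    intro w hw hw'
    obtain ⟨i, hi, hne⟩ := huv
    exact hne ((hw' i hi).symm.trans (hw i hi))
  have FH := first_hit P (cyl (win N) u) (measurableSet_cyl _ _) H0 H1 h0m h1m J hdj _ _
    (fun j _ => hind j v) (fun j _ => hind j u)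
  set p := P.real (cyl (win N) u) with hp
  have hppos : 0 < p := by
    rw [hp, hP, Pm_real_cyl]; exact Finset.prod_pos fun i _ => wt_pos _ _
  have hsum : p / 4 ≤ ∑ j ∈ Finset.range J, P.real (R j ∩ H0 j) := by
    set q : ℝ := (1 / 2) ^ (2 * N + 1) with hq
    have hq0 : 0 < q := by positivity
    have e2 : 2 * ∑ j ∈ Finset.range J, P.real (R j ∩ H0 j) =
        p * (1 - (1 - q - q) ^ J) := by
      apply mul_left_cancel₀ hq0.ne'
      rw [← FH]; ring
    have e3 : (1 - q - q) ^ J ≤ 1 / 2 := by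
      rw [show 1 - q - q = 1 - 2 * q by ring]; exact hJ
    nlinarith
  set E : ℕ → Set Xspace := fun j => R j ∩ H0 j with hE
  have hEm : ∀ j, MeasurableSet (E j) := fun j => (hRm j).inter (h0m j)
  have hEu : ∀ j, E j ⊆ cyl (win N) u := fun j w hw => Rs_anti _ H0 H1 (Nat.zero_le j) hw.1
  have hEE : ∀ j, E j ⊆ EE N ((j + 1) * L) u v := fun j w hw => ⟨hEu j hw, hw.2⟩
  have hEd : ∀ i j, i < j → Disjoint (E i) (E j) := by
    intro i j hij
    rw [Set.disjoint_left]
    intro w hw hw'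
    exact (Rs_notMem hij hw'.1).1 hw.2
  have hEd' : (↑(Finset.range J) : Set ℕ).PairwiseDisjoint (fun j => E j \ A) := by
    intro i _ j _ hij
    rcases lt_or_gt_of_ne hij with h1 | h1
    · exact (hEd i j h1).mono Set.sdiff_subset Set.sdiff_subset
    · exact (hEd j i h1).symm.mono Set.sdiff_subset Set.sdiff_subset
  have hbad : ∑ j ∈ Finset.range J, P.real (E j \ A) ≤ δ * p := by
    rw [← measureReal_biUnion_finset hEd' (fun j _ => (hEm j).diff hA)]
    refine le_trans (measureReal_mono ?_) hu
    intro w hw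
    simp only [Set.mem_iUnion] at hw
    obtain ⟨j, _, hw⟩ := hw
    exact ⟨hEu j hw.1, hw.2⟩
  have hgood : p / 4 - δ * p ≤ ∑ j ∈ Finset.range J, P.real (E j ∩ A) := by
    have : ∑ j ∈ Finset.range J, P.real (E j) =
        ∑ j ∈ Finset.range J, P.real (E j ∩ A) + ∑ j ∈ Finset.range J, P.real (E j \ A) := by
      rw [← Finset.sum_add_distrib]
      exact Finset.sum_congr rfl fun j _ => (measureReal_inter_add_sdiff hA).symm
    linarith
  set Y : ℕ → Set Xspace := fun j => shiftInv^[(j + 1) * L] ⁻¹' (E j ∩ A) with hY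
  have hYm : ∀ j, MeasurableSet (Y j) := fun j =>
    measurable_shiftInv_iter _ ((hEm j).inter hA)
  have hYv : ∀ j, Y j ⊆ cyl (win N) v := by
    intro j y hy i hi
    have h1 : shiftInv^[(j + 1) * L] y (i + ((j + 1) * L : ℕ)) = v i := hy.1.2 i hi
    rw [shiftInv_iter] at h1
    simpa using h1
  have hYd : ∀ i j, i < j → Disjoint (Y i) (Y j) := by
    intro i j hij
    rw [Set.disjoint_left]
    intro y hy hy'
    have h1 : shiftInv^[(i + 1) * L] y ∈ cyl (win N) u := hEu i hy.1
    have h2 := (Rs_notMem (show j - i - 1 < j by omega) hy'.1.1).2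
    apply h2
    intro k hk
    rw [shiftInv_iter, ← h1 k hk, shiftInv_iter]
    congr 1
    rw [show j - i - 1 + 1 = j - i by omega]
    push_cast [Nat.cast_sub hij.le]
    ring
  have hYA : ∀ j < J, P (Y j ∩ A) = 0 := by
    intro j hj
    have h1 : Y j ∩ A = shiftInv^[(j + 1) * L] ⁻¹' (E j ∩ A ∩ shiftT^[(j + 1) * L] ⁻¹' A) := by
      ext y
      simp only [hY, Set.mem_inter_iff, Set.mem_preimage, shiftT_shiftInv]
    have hm : MeasurableSet (E j ∩ A ∩ shiftT^[(j + 1) * L] ⁻¹' A) :=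
      ((hEm j).inter hA).inter (measurable_shiftT_iter _ hA)
    rw [h1, hP, ← nu_apply th _ hm]
    apply h.nu_ac
    refine le_antisymm (le_trans (measure_mono ?_) (hcon ((j + 1) * L) ?_)) bot_le
    · rintro w ⟨⟨hw1, hw2⟩, hw3⟩
      exact ⟨⟨hw2, hw3⟩, hEE j hw1⟩
    · exact Nat.mul_le_mul_right _ hj
  have hYsum : ∑ j ∈ Finset.range J, P.real (Y j) ≤ δ * p := by
    have e1 : ∑ j ∈ Finset.range J, P.real (Y j) = ∑ j ∈ Finset.range J, P.real (Y j \ A) := by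
      refine Finset.sum_congr rfl fun j hj => ?_
      have e2 := measureReal_inter_add_sdiff (μ := P) (s := Y j) hA
      rw [measureReal_def, hYA j (Finset.mem_range.1 hj)] at e2
      simpa using e2.symm
    have hYd' : (↑(Finset.range J) : Set ℕ).PairwiseDisjoint (fun j => Y j \ A) := by
      intro i _ j _ hij
      rcases lt_or_gt_of_ne hij with h1 | h1
      · exact (hYd i j h1).mono Set.sdiff_subset Set.sdiff_subset
      · exact (hYd j i h1).symm.mono Set.sdiff_subset Set.sdiff_subset
    rw [e1, ← measureReal_biUnion_finset hYd' (fun j _ => (hYm j).diff hA)]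
    refine le_trans (measureReal_mono ?_) hv
    intro w hw
    simp only [Set.mem_iUnion] at hw
    obtain ⟨j, _, hw⟩ := hw
    exact ⟨hYv j hw.1, hw.2⟩
  set c := Real.exp (LL th N u v - (J * L : ℕ) * (2 * τ (N + 1))) with hc
  have hle : ∀ j < J, c * P.real (E j ∩ A) ≤ P.real (Y j) := by
    intro j hj
    have hm := (hEm j).inter hA
    have h1 := h.le_nu N ((j + 1) * L) u v (Set.inter_subset_left.trans (hEE j)) hm
    have h2 := ENNReal.toReal_mono (measure_ne_top _ _) h1
    rw [nu_apply th _ hm, ENNReal.toReal_mul, ENNReal.toReal_ofReal (Real.exp_pos _).le] at h2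
    refine le_trans ?_ h2
    refine mul_le_mul_of_nonneg_right ?_ measureReal_nonneg
    rw [hc]
    apply Real.exp_le_exp.2
    have : (((j + 1) * L : ℕ) : ℝ) ≤ ((J * L : ℕ) : ℝ) := by
      exact_mod_cast Nat.mul_le_mul_right _ hj
    have := mul_le_mul_of_nonneg_right this (mul_nonneg zero_le_two (h.nonneg (N + 1)))
    linarith
  have hfin : c * (p / 4 - δ * p) ≤ δ * p := by
    refine le_trans ?_ hYsum
    refine le_trans (mul_le_mul_of_nonneg_left hgood (Real.exp_pos _).le) ?_
    rw [Finset.mul_sum]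
    exact Finset.sum_le_sum fun j hj => hle j (Finset.mem_range.1 hj)
  have : c * (1 / 4 - δ) * p ≤ δ * p := by linarith
  have := le_of_mul_le_mul_right this hppos
  linarith

/-! ### Finding a good pair of cylinders -/

lemma half_pow (l : ℕ) : (1 - (1 / 2 : ℝ) ^ l) ^ (2 ^ l) ≤ 1 / 2 := by
  have h1 : (1 / 2 : ℝ) ^ l ≤ 1 := pow_le_one₀ (by norm_num) (by norm_num)
  have h2 : 1 - (1 / 2 : ℝ) ^ l ≤ Real.exp (-(1 / 2 : ℝ) ^ l) := by
    have := Real.add_one_le_exp (-(1 / 2 : ℝ) ^ l)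
    linarith
  refine (pow_le_pow_left₀ (by linarith) h2 _).trans ?_
  rw [← Real.exp_nat_mul]
  have h3 : ((2 ^ l : ℕ) : ℝ) * -(1 / 2 : ℝ) ^ l = -1 := by
    push_cast
    rw [mul_neg, ← mul_pow]; norm_num
  rw [h3, Real.exp_neg]
  have h4 : (2 : ℝ) ≤ Real.exp 1 := by
    have := Real.add_one_le_exp (1 : ℝ); linarith
  rw [one_div]
  exact inv_anti₀ (by norm_num) h4

def Gam (N' l g : ℕ) : Finset ℤ :=
  Finset.Ico (-(N' : ℤ) + g * l) (-(N' : ℤ) + (g + 1) * l)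

lemma card_Gam (N' l g : ℕ) : (Gam N' l g).card = l := by
  simp only [Gam, Int.card_Ico]
  rw [show -(N' : ℤ) + (g + 1) * l - (-(N' : ℤ) + g * l) = l by ring]
  simp

def flipT (F : Finset ℤ) (u : Xspace) : Xspace := fun i => if i ∈ F then true else u i

lemma LL_flip {th : ℤ → ℝ} {N' : ℕ} {F : Finset ℤ} (hF : F ⊆ win N') {θ : ℝ}
    (hth : ∀ k ∈ F, th k = θ) {u : Xspace} (hu : ∀ k ∈ F, u k = false) :
    LL th N' u (flipT F u) = F.card * θ := by
  unfold LL
  rw [← Finset.sum_subset hF]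
  · rw [← nsmul_eq_mul, ← Finset.sum_const]
    refine Finset.sum_congr rfl fun i hi => ?_
    simp [flipT, hi, hu i hi, hth i hi, Gf]
  · intro i _ hi
    simp [flipT, hi]

lemma pair_find (th : ℤ → ℝ) {N N' l : ℕ} {θ : ℝ} (hl : 1 ≤ l) (hθ : 0 ≤ θ)
    (hN' : N + l * 2 ^ l ≤ N') (hth : ∀ k : ℤ, -(N' : ℤ) ≤ k → k < -(N : ℤ) → th k = θ)
    {C A : Set Xspace} (hC : DepOn (win N) C) (hA : MeasurableSet A) {δ : ℝ} (hδ : 0 ≤ δ)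
    (hCA : (Pm th).real (C \ A) < δ * (Pm th).real C) :
    ∃ u v : Xspace, (∃ i ∈ win N', u i ≠ v i) ∧ LL th N' u v = l * θ ∧
      (Pm th).real (cyl (win N') u \ A) + (Pm th).real (cyl (win N') v \ A) ≤
        δ * (2 * (1 + Real.exp (l * θ))) * (Pm th).real (cyl (win N') u) := by
  classical
  by_contra hcon
  push Not at hcon
  set P := Pm th with hP
  set G := 2 ^ l with hG
  set H0 : ℕ → Set Xspace := fun g => cyl (Gam N' l g) (fun _ => false) with hH0
  set H1 : ℕ → Set Xspace := fun g => cyl (Gam N' l g) (fun _ => true) with hH1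
  set R := Rs C H0 H1 with hR
  have h0m : ∀ j, MeasurableSet (H0 j) := fun j => measurableSet_cyl _ _
  have h1m : ∀ j, MeasurableSet (H1 j) := fun j => measurableSet_cyl _ _
  have hNz : (N : ℤ) + l * G ≤ N' := by exact_mod_cast hN'
  have hGam : ∀ g < G, ∀ k ∈ Gam N' l g, -(N' : ℤ) ≤ k ∧ k < -(N : ℤ) := by
    intro g hg k hk
    simp only [Gam, Finset.mem_Ico] at hk
    have h1 : ((g : ℤ) + 1) * l ≤ G * l := by
      have : (g : ℤ) + 1 ≤ G := by exact_mod_cast hg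
      exact mul_le_mul_of_nonneg_right this (by positivity)
    have h2 : (0 : ℤ) ≤ g * l := by positivity
    constructor
    · linarith [hk.1]
    · linarith [hk.2]
  have hGamW : ∀ g < G, Gam N' l g ⊆ win N' := by
    intro g hg k hk
    have := hGam g hg k hk
    simp only [win, Finset.mem_Icc]
    omega
  have hGne : ∀ g, ∃ i, i ∈ Gam N' l g := by
    intro g
    have : (Gam N' l g).Nonempty := by
      rw [← Finset.card_pos, card_Gam]; omega
    exact this
  have hRd : ∀ g : ℕ, DepOn (win N ∪ Finset.Ico (-(N' : ℤ)) (-(N' : ℤ) + g * l)) (R g) := by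
    intro g
    induction g with
    | zero => exact hC.mono Finset.subset_union_left
    | succ g ih =>
      have hs : ∀ b, DepOn (win N ∪ Finset.Ico (-(N' : ℤ)) (-(N' : ℤ) + (g + 1 : ℕ) * l))
          (cyl (Gam N' l g) b) := by
        intro b
        refine (depOn_cyl _ b).mono (subset_trans ?_ Finset.subset_union_right)
        rw [Gam]
        push_cast
        refine Finset.Ico_subset_Ico ?_ le_rfl
        have h2 : (0 : ℤ) ≤ g * l := by positivity
        linarith
      refine DepOn.diff (ih.mono ?_) ((hs _).union (hs _))
      refine Finset.union_subset_union subset_rfl (Finset.Ico_subset_Ico le_rfl ?_)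
      push_cast
      have h2 : (0 : ℤ) ≤ l := by positivity
      linarith
  have hdisj : ∀ g < G, Disjoint (win N ∪ Finset.Ico (-(N' : ℤ)) (-(N' : ℤ) + g * l))
      (Gam N' l g) := by
    intro g hg
    rw [Finset.disjoint_left]
    intro k hk hk'
    have h1 := hGam g hg k hk'
    simp only [Gam, win, Finset.mem_union, Finset.mem_Ico, Finset.mem_Icc] at hk hk'
    rcases hk with hk | hk
    · omega
    · linarith [hk.2, hk'.1]
  have hq : ∀ g < G, ∀ x : Bool, P.real (cyl (Gam N' l g) (fun _ => x)) = wt θ x ^ l := by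
    intro g hg x
    rw [hP, Pm_real_cyl]
    rw [← card_Gam N' l g, ← Finset.prod_const, card_Gam]
    refine Finset.prod_congr rfl fun k hk => ?_
    have := hGam g hg k hk
    rw [hth k this.1 this.2]
  have hind : ∀ g < G, ∀ x : Bool, P.real (R g ∩ cyl (Gam N' l g) (fun _ => x)) =
      P.real (R g) * wt θ x ^ l := by
    intro g hg x
    rw [← hq g hg x]
    exact Pm_indep th (hdisj g hg) (hRd g) (depOn_cyl _ _)
  have hdH : ∀ g < G, Disjoint (H0 g) (H1 g) := by
    intro g _
    rw [Set.disjoint_left]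
    intro w hw hw'
    obtain ⟨i, hi⟩ := hGne g
    have := (hw i hi).symm.trans (hw' i hi)
    simp at this
  have FH := first_hit P C hC.measurableSet H0 H1 h0m h1m G hdH _ _
    (fun g hg => hind g hg false) (fun g hg => hind g hg true)
  have hRm : ∀ j, MeasurableSet (R j) := fun j => (hRd j).measurableSet
  -- lower bound
  set lam := Real.exp (l * θ) with hlam
  have hlam0 : 0 < lam := Real.exp_pos _
  have hsum : P.real C ≤ 2 * (1 + lam) * ∑ g ∈ Finset.range G, P.real (R g ∩ H0 g) := by
    have hwf : wt θ true + wt θ false = 1 := by rw [wt_true, wt_false]; ring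
    have hwt : wt θ true = Real.exp θ * wt θ false := by
      have := Real.exp_pos θ
      rw [wt_true, wt_false, qf]; field_simp; ring
    have hwq : wt θ true ^ l = lam * wt θ false ^ l := by
      rw [hwt, mul_pow, hlam, Real.exp_nat_mul]
    have hf0 := wt_pos θ false
    have ht0 := wt_pos θ true
    have ht : 1 / 2 ≤ wt θ true := by
      have := Real.one_le_exp hθ
      nlinarith
    have ht2 : (1 / 2 : ℝ) ^ l ≤ wt θ true ^ l := pow_le_pow_left₀ (by norm_num) ht l
    have hle1 : wt θ true ^ l ≤ wt θ true := pow_le_of_le_one ht0.le (by linarith) (by omega)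
    have hle0 : wt θ false ^ l ≤ wt θ false := pow_le_of_le_one hf0.le (by linarith) (by omega)
    have hfp : 0 < wt θ false ^ l := by positivity
    have hpow : (1 - wt θ false ^ l - wt θ true ^ l) ^ G ≤ 1 / 2 :=
      (pow_le_pow_left₀ (by linarith) (by linarith) _).trans (half_pow l)
    have e : (1 + lam) * ∑ g ∈ Finset.range G, P.real (R g ∩ H0 g) =
        P.real C * (1 - (1 - wt θ false ^ l - wt θ true ^ l) ^ G) := by
      apply mul_left_cancel₀ hfp.ne'
      rw [← FH, hwq]; ring
    have hC0 : 0 ≤ P.real C := measureReal_nonneg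
    nlinarith
  -- per-gadget estimate
  have hgad : ∀ g < G, δ * (2 * (1 + lam)) * P.real (R g ∩ H0 g) ≤
      P.real ((R g ∩ H0 g) \ A) + P.real ((R g ∩ H1 g) \ A) := by
    intro g hg
    have hRW : DepOn (win N') (R g) := by
      refine (hRd g).mono (Finset.union_subset (win_mono (by
        have : 0 ≤ l * 2 ^ l := Nat.zero_le _
        omega)) ?_)
      intro k hk
      simp only [Finset.mem_Ico, win, Finset.mem_Icc] at hk ⊢
      have h1 : (g : ℤ) * l ≤ G * l := by
        have : (g : ℤ) ≤ G := by exact_mod_cast hg.le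
        exact mul_le_mul_of_nonneg_right this (by positivity)
      constructor
      · exact hk.1
      · have : (0 : ℤ) ≤ N := by positivity
        have : (0 : ℤ) ≤ N' := by positivity
        linarith [hk.2]
    have hD0 : DepOn (win N') (R g ∩ H0 g) := hRW.inter ((depOn_cyl _ _).mono (hGamW g hg))
    have hD1 : DepOn (win N') (R g ∩ H1 g) := hRW.inter ((depOn_cyl _ _).mono (hGamW g hg))
    set S := (pats (win N')).filter (· ∈ R g ∩ H0 g) with hS
    have hSm : ∀ b ∈ S, b ∈ pats (win N') ∧ b ∈ R g ∧ b ∈ H0 g := by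
      intro b hb
      have := Finset.mem_filter.1 hb
      exact ⟨this.1, this.2.1, this.2.2⟩
    have e0 : P.real (R g ∩ H0 g) = ∑ b ∈ S, P.real (cyl (win N') b) := by
      rw [hD0.real_eq P]
      refine Finset.sum_congr ?_ fun _ _ => rfl
      ext b
      simp [hS]
    have b0 : ∑ b ∈ S, P.real (cyl (win N') b \ A) ≤ P.real ((R g ∩ H0 g) \ A) := by
      rw [← measureReal_biUnion_finset ?_ (fun b _ => (measurableSet_cyl _ b).diff hA)]
      · refine measureReal_mono ?_
        intro w hw
        simp only [Set.mem_iUnion] at hw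
        obtain ⟨b, hb, hw⟩ := hw
        exact ⟨(hD0 w b hw.1).2 (hSm b hb).2, hw.2⟩
      · intro b hb b' hb' hne
        exact (pats_disjoint (hSm b hb).1 (hSm b' hb').1 hne).mono
          Set.sdiff_subset Set.sdiff_subset
    have hfin : ∀ b ∈ S, flipT (Gam N' l g) b ∈ R g ∩ H1 g := by
      intro b hb
      refine ⟨(hRd g _ b ?_).2 (hSm b hb).2.1, ?_⟩
      · intro i hi
        have := Finset.disjoint_left.1 (hdisj g hg) hi
        simp [flipT, this]
      · intro i hi
        simp [flipT, hi]
    have b1 : ∑ b ∈ S, P.real (cyl (win N') (flipT (Gam N' l g) b) \ A) ≤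
        P.real ((R g ∩ H1 g) \ A) := by
      rw [← measureReal_biUnion_finset ?_ (fun b _ => (measurableSet_cyl _ _).diff hA)]
      · refine measureReal_mono ?_
        intro w hw
        simp only [Set.mem_iUnion] at hw
        obtain ⟨b, hb, hw⟩ := hw
        exact ⟨(hD1 w _ hw.1).2 (hfin b hb), hw.2⟩
      · intro b hb b' hb' hne
        refine Disjoint.mono Set.sdiff_subset Set.sdiff_subset ?_
        rw [Set.disjoint_left]
        intro w hw hw'
        apply hne
        obtain ⟨p1, _, z1⟩ := hSm b hb
        obtain ⟨p2, _, z2⟩ := hSm b' hb'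
        rw [eq_trunc_of_mem p2 (w := b) ?_, mem_pats.1 p1]
        intro i hi
        by_cases hiG : i ∈ Gam N' l g
        · exact (z1 i hiG).trans (z2 i hiG).symm
        · have := (hw i hi).symm.trans (hw' i hi)
          simpa [flipT, hiG] using this
    rw [e0, Finset.mul_sum]
    refine le_trans ?_ (add_le_add b0 b1)
    rw [← Finset.sum_add_distrib]
    refine Finset.sum_le_sum fun b hb => ?_
    refine (hcon b (flipT (Gam N' l g) b) ?_ ?_).le
    · obtain ⟨i, hi⟩ := hGne g
      refine ⟨i, hGamW g hg hi, ?_⟩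
      rw [(hSm b hb).2.2 i hi]
      simp [flipT, hi]
    · rw [LL_flip (hGamW g hg) (fun k hk => hth k (hGam g hg k hk).1 (hGam g hg k hk).2)
        (fun k hk => (hSm b hb).2.2 k hk), card_Gam]
  -- total
  have htot : ∑ g ∈ Finset.range G, (P.real ((R g ∩ H0 g) \ A) + P.real ((R g ∩ H1 g) \ A)) ≤
      P.real (C \ A) := by
    have e : ∀ g ∈ Finset.range G, P.real ((R g ∩ H0 g) \ A) + P.real ((R g ∩ H1 g) \ A) =
        P.real ((R g ∩ (H0 g ∪ H1 g)) \ A) := by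
      intro g hg
      rw [Set.inter_union_distrib_left, Set.union_sdiff_distrib, measureReal_union]
      · exact (hdH g (Finset.mem_range.1 hg)).mono
          (Set.sdiff_subset.trans Set.inter_subset_right)
          (Set.sdiff_subset.trans Set.inter_subset_right)
      · exact ((hRm g).inter (h1m g)).diff hA
    rw [Finset.sum_congr rfl e, ← measureReal_biUnion_finset ?_
      (fun g _ => ((hRm g).inter ((h0m g).union (h1m g))).diff hA)]
    · refine measureReal_mono ?_
      intro w hw
      simp only [Set.mem_iUnion] at hw
      obtain ⟨g, _, hw⟩ := hw
      exact ⟨Rs_anti C H0 H1 (Nat.zero_le g) hw.1.1, hw.2⟩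
    · have hlt : ∀ i j, i < j → Disjoint ((R i ∩ (H0 i ∪ H1 i)) \ A)
          ((R j ∩ (H0 j ∪ H1 j)) \ A) := by
        intro i j hij
        rw [Set.disjoint_left]
        intro w hw hw'
        have := Rs_notMem hij hw'.1.1
        rcases hw.1.2 with h | h
        · exact this.1 h
        · exact this.2 h
      intro i _ j _ hij
      rcases lt_or_gt_of_ne hij with h1 | h1
      · exact hlt i j h1
      · exact (hlt j i h1).symm
  have h3 : δ * (2 * (1 + lam)) * ∑ g ∈ Finset.range G, P.real (R g ∩ H0 g) ≤ P.real (C \ A) := by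
    rw [Finset.mul_sum]
    exact (Finset.sum_le_sum fun g hg => hgad g (Finset.mem_range.1 hg)).trans htot
  have h4 := mul_le_mul_of_nonneg_left hsum hδ
  linarith

/-! ### The explicit parameters -/

def lmax (N : ℕ) : ℕ := N * 2 ^ (4 * N + 4)

def Nseq : ℕ → ℕ
  | 0 => 1
  | t + 1 => Nseq t + lmax (Nseq t) * 2 ^ lmax (Nseq t)

lemma Nseq_pos (t : ℕ) : 0 < Nseq t := by
  induction t with
  | zero => simp [Nseq]
  | succ t ih => rw [Nseq]; omega

lemma Nseq_lt_succ (t : ℕ) : Nseq t < Nseq (t + 1) := by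
  rw [Nseq]
  have h1 := Nseq_pos t
  have : 0 < lmax (Nseq t) * 2 ^ lmax (Nseq t) := by
    have : 0 < lmax (Nseq t) := by unfold lmax; positivity
    positivity
  omega

lemma Nseq_strictMono : StrictMono Nseq := strictMono_nat_of_lt_succ Nseq_lt_succ

lemma le_Nseq (t : ℕ) : t ≤ Nseq t := Nseq_strictMono.id_le t

def idx (m : ℕ) : ℕ := Nat.findGreatest (fun t => Nseq t < m) m

lemma idx_mono : Monotone idx := by
  intro m n h
  exact Nat.findGreatest_mono (fun t (ht : Nseq t < m) => lt_of_lt_of_le ht h) h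

lemma idx_eq {t m : ℕ} (h1 : Nseq t < m) (h2 : m ≤ Nseq (t + 1)) : idx m = t := by
  rw [idx, Nat.findGreatest_eq_iff]
  refine ⟨(le_Nseq t).trans h1.le, fun _ => h1, fun n hn _ hc => ?_⟩
  have : Nseq (t + 1) ≤ Nseq n := Nseq_strictMono.monotone hn
  omega

def tau (m : ℕ) : ℝ := (1 / 2) ^ (4 * Nseq (idx m) + 4)

def thz (k : ℤ) : ℝ := if k < 0 then tau (-k).toNat else 0

lemma tau_le (m : ℕ) : tau m ≤ 1 / 2 := by
  refine pow_le_of_le_one (by norm_num) (by norm_num) (by omega)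

lemma tau_pos (m : ℕ) : 0 < tau m := by unfold tau; positivity

lemma good_tau : Good tau thz where
  anti := by
    intro m n h
    have := Nseq_strictMono.monotone (idx_mono h)
    exact pow_le_pow_of_le_one (by norm_num) (by norm_num) (by omega)
  nonneg m := (tau_pos m).le
  zero k hk := by simp [thz, hk]
  neg m hm := by
    rw [thz, if_pos (by omega)]
    congr 1; omega

lemma thz_block {t : ℕ} (k : ℤ) (h1 : -(Nseq (t + 1) : ℤ) ≤ k) (h2 : k < -(Nseq t : ℤ)) :
    thz k = (1 / 2) ^ (4 * Nseq t + 4) := by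
  rw [thz, if_pos (by omega), tau, idx_eq (t := t)] <;> omega

lemma err_le (t : ℕ) :
    ((2 ^ (2 * Nseq (t + 1)) * (2 * Nseq (t + 1) + 1) : ℕ) : ℝ) * (2 * tau (Nseq (t + 1) + 1)) ≤
      (1 / 2) ^ t := by
  rw [tau, idx_eq (t := t + 1) (by omega) (by have := Nseq_lt_succ (t + 1); omega)]
  have ht := le_Nseq (t + 1)
  generalize Nseq (t + 1) = n at *
  have h1 : 2 * n + 1 ≤ 2 ^ (n + 1) := by
    have := n.lt_two_pow_self
    rw [pow_succ]; omega
  have h2 : ((2 * n + 1 : ℕ) : ℝ) ≤ 2 ^ (n + 1) := by exact_mod_cast h1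
  have h3 : ((2 ^ (2 * n) * (2 * n + 1) : ℕ) : ℝ) ≤ 2 ^ (2 * n) * 2 ^ (n + 1) := by
    rw [Nat.cast_mul, Nat.cast_pow, Nat.cast_ofNat]
    exact mul_le_mul_of_nonneg_left h2 (by positivity)
  have h4 : (2 : ℝ) ^ (2 * n) * 2 ^ (n + 1) * (2 * (1 / 2) ^ (4 * n + 4)) = (1 / 2) ^ (n + 2) := by
    rw [one_div, inv_pow, inv_pow]
    field_simp
    ring
  refine (mul_le_mul_of_nonneg_right h3 (by positivity)).trans ?_
  rw [h4]
  exact pow_le_pow_of_le_one (by norm_num) (by norm_num) (by omega)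

lemma LL_symm (th : ℤ → ℝ) (N : ℕ) (u v : Xspace) : LL th N v u = - LL th N u v := by
  unfold LL
  rw [← Finset.sum_neg_distrib]
  exact Finset.sum_congr rfl fun i _ => by ring

lemma cyl_LL (th : ℤ → ℝ) (N : ℕ) (u v : Xspace) :
    (Pm th).real (cyl (win N) v) = Real.exp (LL th N u v) * (Pm th).real (cyl (win N) u) := by
  rw [Pm_real_cyl, Pm_real_cyl, prod_wt, prod_wt, ← mul_assoc, ← Real.exp_add, LL,
    Finset.sum_sub_distrib]
  congr 2
  ring

set_option maxHeartbeats 1600000 in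
lemma mem_ratio {lam : ℝ} (hlam : 0 < lam) : lam ∈ ratioSet (Pm thz) := by
  refine ⟨hlam.le, fun A hA hPA ε hε => ?_⟩
  set P := Pm thz with hP
  set s := Real.log lam with hs
  have hes : Real.exp s = lam := Real.exp_log hlam
  -- continuity
  obtain ⟨η, hη, hηc⟩ : ∃ η > 0, ∀ x, |x - s| ≤ 2 * η → |Real.exp x - lam| ≤ ε := by
    have := Metric.continuous_iff.1 Real.continuous_exp s ε hε
    obtain ⟨d, hd, h⟩ := this
    refine ⟨d / 4, by positivity, fun x hx => ?_⟩
    rw [← hes]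
    exact (h x (by rw [Real.dist_eq]; linarith)).le
  set c0 := Real.exp (s - 1) with hc0
  have hc0p : 0 < c0 := Real.exp_pos _
  set δ0 := min (1 / 8) (c0 / 16) with hδ0
  have hδ0p : 0 < δ0 := by rw [hδ0]; positivity
  have hδ08 : δ0 ≤ 1 / 8 := min_le_left _ _
  have hδ0c : δ0 ≤ c0 / 16 := min_le_right _ _
  set D := Real.exp (|s| + 1) with hD
  have hDp : 0 < D := Real.exp_pos _
  set δ := δ0 / (2 * (1 + D)) with hδ
  have hδp : 0 < δ := by rw [hδ]; positivity
  have hδ1 : δ ≤ 1 := by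
    rw [hδ, div_le_one (by positivity)]; linarith
  have hPA' : 0 < P.real A := by
    rw [measureReal_def]; exact ENNReal.toReal_pos hPA.ne' (measure_ne_top _ _)
  obtain ⟨K, C, hCd, hCA⟩ := approx_cyl P hA (ε := δ * P.real A / 2) (by positivity)
  have hCm := hCd.measurableSet
  have hCA1 : P.real (C \ A) < δ * P.real C := by
    have h1 : P.real (C \ A) ≤ P.real (symmDiff A C) :=
      measureReal_mono (fun w hw => Or.inr hw)
    have h2 : P.real A ≤ P.real C + P.real (symmDiff A C) := by
      refine le_trans (measureReal_mono ?_) (measureReal_union_le _ _)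
      intro w hw
      by_cases hc : w ∈ C
      · exact Or.inl hc
      · exact Or.inr (Or.inl ⟨hw, hc⟩)
    have h3 : δ * P.real A ≤ 1 * P.real A := mul_le_mul_of_nonneg_right hδ1 hPA'.le
    have h4 : δ * (P.real A / 2) ≤ δ * P.real C :=
      mul_le_mul_of_nonneg_left (by linarith) hδp.le
    linarith
  -- choose t
  obtain ⟨t0, ht0⟩ : ∃ t0 : ℕ, ∀ t ≥ t0, (1 / 2 : ℝ) ^ t ≤ min η (1 / 2) := by
    have h1 : Tendsto (fun t : ℕ => (1 / 2 : ℝ) ^ t) atTop (𝓝 0) :=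
      tendsto_pow_atTop_nhds_zero_of_lt_one (by norm_num) (by norm_num)
    have h2 := h1.eventually (ge_mem_nhds (show (0 : ℝ) < min η (1 / 2) by positivity))
    exact eventually_atTop.1 h2
  obtain ⟨t1, ht1⟩ := exists_nat_ge (|s| + 1)
  set t := max t0 (max t1 K) with ht
  have htt := ht0 t (le_max_left _ _)
  have htη := htt.trans (min_le_left _ _)
  have hth := htt.trans (min_le_right _ _)
  set N := Nseq t with hN
  have htN : t ≤ N := le_Nseq t
  have hKN : K ≤ N := by omega
  have hsN : |s| + 1 ≤ N := by
    refine ht1.trans ?_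
    exact_mod_cast (show t1 ≤ N by omega)
  set k := 4 * N + 4 with hk
  set θ : ℝ := (1 / 2) ^ k with hθ
  have hθp : 0 < θ := by positivity
  have hθt : θ ≤ (1 / 2) ^ t :=
    pow_le_pow_of_le_one (by norm_num) (by norm_num) (by omega)
  have h2k : (2 : ℝ) ^ k * θ = 1 := by rw [hθ, ← mul_pow]; norm_num
  have h2k1 : (1 : ℝ) ≤ 2 ^ k := one_le_pow₀ (by norm_num)
  set l := ⌊|s| * 2 ^ k⌋₊ + 1 with hl
  have hl1 : |s| * 2 ^ k ≤ l := by
    rw [hl]; push_cast; exact (Nat.lt_floor_add_one _).le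
  have hl2 : (l : ℝ) ≤ |s| * 2 ^ k + 1 := by
    rw [hl]; push_cast
    have := Nat.floor_le (show 0 ≤ |s| * 2 ^ k by positivity)
    linarith
  have hlθ1 : |s| ≤ l * θ := by
    have := mul_le_mul_of_nonneg_right hl1 hθp.le
    rwa [mul_assoc, h2k, mul_one] at this
  have hlθ2 : l * θ ≤ |s| + θ := by
    have := mul_le_mul_of_nonneg_right hl2 hθp.le
    rwa [add_mul, mul_assoc, h2k, mul_one, one_mul] at this
  have hlmax : l ≤ lmax N := by
    have h1 : (l : ℝ) ≤ N * 2 ^ k := by nlinarith [abs_nonneg s]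
    unfold lmax
    exact_mod_cast h1
  set N' := Nseq (t + 1) with hN'
  have hNN' : N + l * 2 ^ l ≤ N' := by
    rw [hN', Nseq]
    exact Nat.add_le_add_left (Nat.mul_le_mul hlmax (Nat.pow_le_pow_right (by norm_num) hlmax)) _
  obtain ⟨u, v, huv, hLL, hbad⟩ := pair_find thz (N := N) (N' := N') (l := l) (θ := θ)
    (by omega) hθp.le hNN' (fun k h1 h2 => thz_block k h1 h2) (hCd.mono (win_mono hKN)) hA hδp.le hCA1
  rw [← hP] at hbad
  have hu0 : 0 ≤ P.real (cyl (win N') u) := measureReal_nonneg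
  have hbad2 : P.real (cyl (win N') u \ A) + P.real (cyl (win N') v \ A) ≤
      δ0 * P.real (cyl (win N') u) := by
    refine hbad.trans (mul_le_mul_of_nonneg_right ?_ hu0)
    have h1 : Real.exp (l * θ) ≤ D := Real.exp_le_exp.2 (by linarith)
    have h2 : δ0 = δ * (2 * (1 + D)) := by rw [hδ]; field_simp
    rw [h2]
    exact mul_le_mul_of_nonneg_left (by linarith) hδp.le
  have hbu : 0 ≤ P.real (cyl (win N') u \ A) := measureReal_nonneg
  have hbv : 0 ≤ P.real (cyl (win N') v \ A) := measureReal_nonneg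
  obtain ⟨u', v', huv', hLL', hu', hv'⟩ : ∃ u' v' : Xspace, (∃ i ∈ win N', u' i ≠ v' i) ∧
      |LL thz N' u' v' - s| ≤ θ ∧
      P.real (cyl (win N') u' \ A) ≤ δ0 * P.real (cyl (win N') u') ∧
      P.real (cyl (win N') v' \ A) ≤ δ0 * P.real (cyl (win N') u') := by
    rcases le_total 0 s with h0 | h0
    · rw [abs_of_nonneg h0] at hlθ1 hlθ2
      refine ⟨u, v, huv, ?_, by linarith, by linarith⟩
      rw [hLL, abs_le]; constructor <;> linarith
    · rw [abs_of_nonpos h0] at hlθ1 hlθ2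
      have hvu : P.real (cyl (win N') u) ≤ P.real (cyl (win N') v) := by
        rw [hP, cyl_LL thz N' u v, hLL]
        have h1 : 1 ≤ Real.exp (l * θ) := Real.one_le_exp (by positivity)
        exact le_mul_of_one_le_left hu0 h1
      have := mul_le_mul_of_nonneg_left hvu hδ0p.le
      obtain ⟨i, hi, hne⟩ := huv
      refine ⟨v, u, ⟨i, hi, hne.symm⟩, ?_, by linarith, by linarith⟩
      rw [LL_symm, hLL, abs_le]; constructor <;> linarith
  have herr := err_le t
  rw [← hN'] at herr
  rw [abs_le] at hLL'
  clear_value N' θ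
  obtain ⟨n, hn, hpos⟩ := good_tau.pair_ratio (J := 2 ^ (2 * N')) huv' hA (by
      have := half_pow (2 * N')
      rwa [show (1 : ℝ) - 2 * (1 / 2) ^ (2 * N' + 1) = 1 - (1 / 2) ^ (2 * N') by ring]) hu' hv' (by
      have h1 : c0 ≤ Real.exp (LL thz N' u' v' -
          (2 ^ (2 * N') * (2 * N' + 1) : ℕ) * (2 * tau (N' + 1))) :=
        Real.exp_le_exp.2 (by linarith [hLL'.1])
      have h2 : c0 * (1 / 8) ≤ Real.exp (LL thz N' u' v' -
          (2 ^ (2 * N') * (2 * N' + 1) : ℕ) * (2 * tau (N' + 1))) * (1 / 4 - δ0) :=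
        mul_le_mul h1 (by linarith) (by norm_num) (Real.exp_pos _).le
      linarith)
  refine ⟨n, lt_of_lt_of_le hpos (measure_mono_ae ?_)⟩
  filter_upwards [good_tau.rn N' n u' v'] with w hw hmem
  refine ⟨hmem.1, ?_⟩
  obtain ⟨h1, h2⟩ := hw hmem.2
  have hnerr : (n : ℝ) * (2 * tau (N' + 1)) ≤ (1 / 2) ^ t := by
    refine le_trans (mul_le_mul_of_nonneg_right ?_ ?_) herr
    · exact_mod_cast hn
    · exact mul_nonneg zero_le_two (tau_pos (N' + 1)).le
  have hnerr0 : 0 ≤ (n : ℝ) * (2 * tau (N' + 1))  :=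
    mul_nonneg (Nat.cast_nonneg n) (mul_nonneg zero_le_two (tau_pos (N' + 1)).le)
  have a1 := hηc (LL thz N' u' v' - n * (2 * tau (N' + 1)))
    (by rw [abs_le]; constructor <;> linarith [hLL'.1, hLL'.2])
  have a2 := hηc (LL thz N' u' v' + n * (2 * tau (N' + 1)))
    (by rw [abs_le]; constructor <;> linarith [hLL'.1, hLL'.2])
  rw [abs_le] at a1 a2
  change |(rnD P n w).toReal - lam| ≤ ε
  rw [abs_le]
  constructor <;> linarith [a1.1, a2.2]

lemma qf_bounds {θ : ℝ} (h0 : 0 ≤ θ) (h1 : θ < 1) :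
    1 / (1 + Real.exp 1) < qf θ ∧ qf θ < Real.exp 1 / (1 + Real.exp 1) := by
  have e1 : 1 ≤ Real.exp θ := Real.one_le_exp h0
  have e2 : Real.exp θ < Real.exp 1 := Real.exp_lt_exp.2 h1
  unfold qf
  constructor
  · rw [div_lt_div_iff₀ (by linarith) (by linarith)]; nlinarith
  · rw [div_lt_div_iff₀ (by linarith) (by linarith)]; nlinarith

/-- there is a product measure `P` on `{0,1}^ℤ` with coordinate probabilities
in `(1/(1+e), e/(1+e))` under which the shift is nonsingular, every `λ > 0` belongs to the
ratio set, and there is no equivalent σ-finite shift-invariant measure. -/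
theorem exists_typeIII₁_product_measure :
    ∃ (q : ℤ → ℝ) (P : Measure Xspace),
      (∀ k : ℤ, 1 / (1 + Real.exp 1) < q k ∧ q k < Real.exp 1 / (1 + Real.exp 1)) ∧
      IsProductMeasure q P ∧
      ShiftNonsingular P ∧
      (∀ lam : ℝ, 0 < lam → lam ∈ ratioSet P) ∧
      ¬ ∃ μ : Measure Xspace, SigmaFinite μ ∧ μ ≪ P ∧ P ≪ μ ∧
          Measure.map shiftInv μ = μ := by
  have hrat : ∀ lam : ℝ, 0 < lam → lam ∈ ratioSet (Pm thz) := fun lam h => mem_ratio h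
  refine ⟨fun k => qf (thz k), Pm thz, fun k => ?_, ⟨inferInstance, fun k l b => ?_⟩,
    ⟨?_, ?_⟩, hrat, no_invariant (Pm thz) (fun n => good_tau.nu_ac n) (hrat 2 two_pos)⟩
  · apply qf_bounds
    · unfold thz; split_ifs
      · exact (tau_pos _).le
      · exact le_rfl
    · unfold thz; split_ifs
      · exact (tau_le _).trans_lt (by norm_num)
      · exact zero_lt_one
  · have := Pm_cyl thz (Finset.Icc k l) b
    rw [ENNReal.ofReal_prod_of_nonneg (fun i _ => (wt_pos _ _).le)] at this
    refine Eq.trans this (Finset.prod_congr rfl fun i _ => ?_)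
    cases b i
    · simp [wt_false]
    · simp [wt_true]
  · exact good_tau.nu_ac 1
  · exact good_tau.ac_nu 1
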